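/- Let γ₀ : [0,1] → ℝ² be an unconstrained minimizing geodesic joining p₋ to p₊. Then there exists ε₁ > 0 such that for every A with |A − 𝒜(γ₀)| < ε₁, the isoperimetric problem with constraint A has a solution γ_A : [a,b] → ℝ² which meets the wells only at its endpoints: γ_A(t) ∉ {p₋, p₊} for all t ∈ (a,b) (i.e. the solution contains no bubbles through the wells). -/

import Mathlib

open MeasureTheory Set Filter Topology
open scoped ENNReal

noncomputable section

/-- The Euclidean norm of a vector in `ℝ × ℝ`. -/
def enorm2 (v : ℝ × ℝ) : ℝ := Real.sqrt (v.1 ^ 2 + v.2 ^ 2)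

/-- The degenerate length `E(γ) = ∫ₐᵇ F(γ(t)) |γ'(t)| dt` of a planar curve. -/
def degLen (F : ℝ × ℝ → ℝ) (a b : ℝ) (γ : ℝ → ℝ × ℝ) : ℝ :=
  ∫ t in a..b, F (γ t) * enorm2 (deriv γ t)

/-- The signed area `𝒜(γ) = ∫ₐᵇ γ¹(t) (γ²)'(t) dt` of a planar curve. -/
def sArea (a b : ℝ) (γ : ℝ → ℝ × ℝ) : ℝ :=
  ∫ t in a..b, (γ t).1 * deriv (fun s => (γ s).2) t

/-- A locally Lipschitz curve on `[a,b]` joining `p` to `q`. -/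
def IsCurve (a b : ℝ) (γ : ℝ → ℝ × ℝ) (p q : ℝ × ℝ) : Prop :=
  a ≤ b ∧ LocallyLipschitz γ ∧ γ a = p ∧ γ b = q

/-- The standing hypotheses on the potential `W`: smooth, nonnegative, vanishing exactly at the
two distinct wells `pm` and `pp`, with positive definite Hessians there, and bounded away from
zero near infinity (`liminf_{|p|→∞} W(p) > 0`). -/
structure TwoWell (W : ℝ × ℝ → ℝ) (pm pp : ℝ × ℝ) : Prop where
  smooth : ContDiff ℝ (⊤ : ℕ∞) W
  nonneg : ∀ p, 0 ≤ W p
  wells_ne : pm ≠ pp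
  zeroSet : ∀ p, W p = 0 ↔ p = pm ∨ p = pp
  hess_m : ∀ v : ℝ × ℝ, v ≠ 0 → 0 < iteratedFDeriv ℝ 2 W pm ![v, v]
  hess_p : ∀ v : ℝ × ℝ, v ≠ 0 → 0 < iteratedFDeriv ℝ 2 W pp ![v, v]
  coercive : ∃ c > 0, ∃ R : ℝ, ∀ p : ℝ × ℝ, R ≤ ‖p‖ → c ≤ W p

/-- `γ : [a,b] → ℝ²` solves the isoperimetric problem with constraint `A`: it is a locally
Lipschitz curve from `pm` to `pp` with signed area `A` minimizing the degenerate length `E`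
among all such curves. -/
def IsoSol (F : ℝ × ℝ → ℝ) (pm pp : ℝ × ℝ) (A : ℝ) (a b : ℝ) (γ : ℝ → ℝ × ℝ) : Prop :=
  IsCurve a b γ pm pp ∧ sArea a b γ = A ∧
  ∀ a' b' γ', IsCurve a' b' γ' pm pp → sArea a' b' γ' = A →
    degLen F a b γ ≤ degLen F a' b' γ'

open scoped NNReal

/-!
Write `F = √W`, `E` for the degenerate length and `𝒜` for the area. The curve is found by minimizing
the penalized functional `E + κ |𝒜 - A|` without constraint.

The area form `x dy` plus a suitable exact form vanishes at both wells, where `F` vanishes only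
linearly. Hence cutting a piece out of a curve changes the area by at most `C₀ E(piece)`, up to
boundary terms. When `κ C₀ ≤ 1/2` it is therefore profitable to cut off every loop through a well,
and comparing the arc between a point and a well with the straight segment bounds its degenerate
length by the squared distance to the well. This controls the Euclidean length near the wells, so
competitors can be taken uniformly Lipschitz, and the Arzelà–Ascoli theorem together with lower
semicontinuity yields a penalized minimizer meeting the wells only at its endpoints.

A quadratic shear by `s` that fixes the wells changes the area of every admissible curve by exactly
`s / 6`, while `E` is convex along it up to an error of order `s²`. If a penalized minimizer had the
wrong area, shearing it slightly towards `A` would cost length at a rate of at least `κ / 6`, so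
shearing it the other way would save length at a comparable rate and beat the minimizing
geodesic `γ₀`. Hence the minimizer has area exactly `A`.
-/

/-! ### Calculus along locally Lipschitz curves -/

section LipschitzCurves

variable {E : Type*} [NormedAddCommGroup E] {γ : ℝ → E}

lemma continuous_uncurry_norm_snd : Continuous (Function.uncurry fun _ v : E => ‖v‖) :=
  continuous_snd.norm

lemma lipschitzWith_of_norm_sub_le {K : ℝ≥0}
    (h : ∀ x y, x ≤ y → ‖γ y - γ x‖ ≤ K * (y - x)) : LipschitzWith K γ := by
  refine LipschitzWith.of_dist_le_mul fun x y => ?_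
  wlog hxy : x ≤ y generalizing x y
  · rw [dist_comm, dist_comm x]
    exact this y x (le_of_not_ge hxy)
  rw [dist_comm, dist_comm x, dist_eq_norm, Real.dist_eq, abs_of_nonneg (sub_nonneg.2 hxy)]
  exact h x y hxy

lemma exists_lipschitzOnWith_Icc (hγ : LocallyLipschitz γ) (a b : ℝ) :
    ∃ K : ℝ≥0, LipschitzOnWith K γ (Icc a b) :=
  hγ.locallyLipschitzOn.exists_lipschitzOnWith_of_compact isCompact_Icc

lemma exists_lipschitzWith_eqOn_Icc (hγ : LocallyLipschitz γ) {a b : ℝ} (hab : a ≤ b) :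
    ∃ (K : ℝ≥0) (β : ℝ → E), LipschitzWith K β ∧ EqOn β γ (Icc a b) := by
  obtain ⟨K, hK⟩ := exists_lipschitzOnWith_Icc hγ a b
  refine ⟨K, fun t => γ (projIcc a b hab t), ?_, fun t ht => by simp only [projIcc_of_mem hab ht]⟩
  exact mul_one K ▸ (lipschitzOnWith_iff_restrict.1 hK).comp (LipschitzWith.projIcc hab)

/-- A `Λ`-Lipschitz curve that joins `p` to `q` in unit time. -/
structure IsUnitTimeCurve (Λ : ℝ≥0) (p q : E) (γ : ℝ → E) : Prop where
  lipschitzWith : LipschitzWith Λ γ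
  apply_zero : γ 0 = p
  apply_one : γ 1 = q

lemma IsUnitTimeCurve.weaken {Λ Λ' : ℝ≥0} {p q : E} (hγ : IsUnitTimeCurve Λ p q γ) (h : Λ ≤ Λ') :
    IsUnitTimeCurve Λ' p q γ :=
  ⟨hγ.lipschitzWith.weaken h, hγ.apply_zero, hγ.apply_one⟩

end LipschitzCurves

section Action

variable {E : Type*} [NormedAddCommGroup E] [NormedSpace ℝ E] {Φ Ψ : E → E → ℝ} {γ β : ℝ → E}
  {a b c : ℝ}

/-- The integral `∫ₐᵇ Φ(γ, γ')` of a Lagrangian `Φ(p, v)` along a curve. The degenerate length,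
the signed area and the integral of a `1`-form are all of this kind. -/
def action (Φ : E → E → ℝ) (a b : ℝ) (γ : ℝ → E) : ℝ :=
  ∫ t in a..b, Φ (γ t) (deriv γ t)

/-- Lagrangians that are positively homogeneous of degree one in the velocity, i.e. those whose
action does not depend on the parametrization. -/
def PosHomogeneous (Φ : E → E → ℝ) : Prop :=
  ∀ p v, ∀ r : ℝ, 0 < r → Φ p (r • v) = r * Φ p v

/-- The length of a curve measured with the norm of the ambient space. -/
abbrev normLength (a b : ℝ) (γ : ℝ → E) : ℝ := action (fun _ v => ‖v‖) a b γ

lemma exists_norm_deriv_le (hγ : LocallyLipschitz γ) (a b : ℝ) :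
    ∃ K : ℝ, ∀ t ∈ Icc a b, ‖deriv γ t‖ ≤ K := by
  obtain ⟨K, hK⟩ := exists_lipschitzOnWith_Icc hγ (a - 1) (b + 1)
  exact ⟨K, fun t ht => norm_deriv_le_of_lipschitzOn
    (Icc_mem_nhds (by linarith [ht.1]) (by linarith [ht.2])) hK⟩

lemma action_congr_of_eqOn_Ioo (hab : a ≤ b) (h : EqOn γ β (Ioo a b)) :
    action Φ a b γ = action Φ a b β := by
  simp only [action, intervalIntegral.integral_of_le hab, integral_Ioc_eq_integral_Ioo]
  refine setIntegral_congr_fun measurableSet_Ioo fun t ht => ?_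
  have heq : γ =ᶠ[𝓝 t] β := h.eventuallyEq_of_mem (Ioo_mem_nhds ht.1 ht.2)
  simp only [h ht, heq.deriv_eq]

lemma action_nonneg (hΦ : ∀ p v, 0 ≤ Φ p v) (hab : a ≤ b) : 0 ≤ action Φ a b γ :=
  intervalIntegral.integral_nonneg hab fun _ _ => hΦ _ _

lemma integral_deriv_of_locallyLipschitz {u : ℝ → ℝ} (hu : LocallyLipschitz u) (a b : ℝ) :
    ∫ t in a..b, deriv u t = u b - u a := by
  obtain ⟨K, hK⟩ := exists_lipschitzOnWith_Icc hu (min a b) (max a b)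
  exact hK.absolutelyContinuousOnInterval.integral_deriv_eq_sub

variable [FiniteDimensional ℝ E]

lemma ae_differentiableAt_of_locallyLipschitz (hγ : LocallyLipschitz γ) :
    ∀ᵐ t, DifferentiableAt ℝ γ t := by
  have hIcc : ∀ n : ℕ, ∀ᵐ t, t ∈ Icc (-(n : ℝ)) n →
      DifferentiableWithinAt ℝ γ (Icc (-(n : ℝ)) n) t := fun n =>
    (exists_lipschitzOnWith_Icc hγ _ _).choose_spec.ae_differentiableWithinAt_of_mem_real
  filter_upwards [ae_all_iff.2 hIcc] with t ht
  obtain ⟨n, hn⟩ := exists_nat_gt |t|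
  obtain ⟨hn₁, hn₂⟩ := abs_lt.1 hn
  exact (ht n ⟨hn₁.le, hn₂.le⟩).differentiableAt (Icc_mem_nhds hn₁ hn₂)

lemma intervalIntegrable_lagrangian (hΦ : Continuous (Function.uncurry Φ)) (hγ : Continuous γ)
    {v : ℝ → E} (hv : StronglyMeasurable v) {K : ℝ} (hK : ∀ t ∈ uIcc a b, ‖v t‖ ≤ K) :
    IntervalIntegrable (fun t => Φ (γ t) (v t)) volume a b := by
  have hmeas : StronglyMeasurable fun t => Φ (γ t) (v t) :=
    hΦ.comp_stronglyMeasurable (hγ.stronglyMeasurable.prodMk hv)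
  have hcompact : IsCompact ((γ '' uIcc a b) ×ˢ Metric.closedBall (0 : E) K) :=
    have := FiniteDimensional.proper ℝ E
    (isCompact_uIcc.image hγ).prod (isCompact_closedBall _ _)
  obtain ⟨M, hM⟩ := hcompact.exists_bound_of_continuousOn hΦ.continuousOn
  refine (intervalIntegrable_const (c := M)).mono_fun' hmeas.aestronglyMeasurable ?_
  filter_upwards [ae_restrict_mem measurableSet_uIoc] with t ht
  have htI : t ∈ uIcc a b := uIoc_subset_uIcc ht
  exact hM (γ t, v t) ⟨mem_image_of_mem _ htI, mem_closedBall_zero_iff.2 (hK t htI)⟩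

lemma intervalIntegrable_action (hΦ : Continuous (Function.uncurry Φ)) (hγ : LocallyLipschitz γ)
    (a b : ℝ) : IntervalIntegrable (fun t => Φ (γ t) (deriv γ t)) volume a b :=
  have := FiniteDimensional.complete ℝ E
  have ⟨_, hK⟩ := exists_norm_deriv_le hγ (min a b) (max a b)
  intervalIntegrable_lagrangian hΦ hγ.continuous (stronglyMeasurable_deriv γ) hK

lemma action_mono (hΦ : Continuous (Function.uncurry Φ)) (hΨ : Continuous (Function.uncurry Ψ))
    (hγ : LocallyLipschitz γ) (hab : a ≤ b)
    (hle : ∀ t ∈ Icc a b, Φ (γ t) (deriv γ t) ≤ Ψ (γ t) (deriv γ t)) :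
    action Φ a b γ ≤ action Ψ a b γ :=
  intervalIntegral.integral_mono_on hab (intervalIntegrable_action hΦ hγ a b)
    (intervalIntegrable_action hΨ hγ a b) hle

lemma action_add_adjacent (hΦ : Continuous (Function.uncurry Φ)) (hγ : LocallyLipschitz γ)
    (a b c : ℝ) : action Φ a b γ + action Φ b c γ = action Φ a c γ :=
  intervalIntegral.integral_add_adjacent_intervals (intervalIntegrable_action hΦ hγ a b)
    (intervalIntegrable_action hΦ hγ b c)

lemma action_mono_interval (hΦ : Continuous (Function.uncurry Φ)) (hΦ₀ : ∀ p v, 0 ≤ Φ p v)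
    (hγ : LocallyLipschitz γ) {d : ℝ} (hab : a ≤ b) (hcd : c ≤ d) :
    action Φ b c γ ≤ action Φ a d γ := by
  rw [← action_add_adjacent hΦ hγ a b d, ← action_add_adjacent hΦ hγ b c d]
  linarith [action_nonneg (γ := γ) hΦ₀ hab, action_nonneg (γ := γ) hΦ₀ hcd]

lemma abs_action_le_mul (hΦ : Continuous (Function.uncurry Φ))
    (hΨ : Continuous (Function.uncurry Ψ)) (hγ : LocallyLipschitz γ) (hab : a ≤ b) (C : ℝ)
    (hle : ∀ t ∈ Icc a b, |Φ (γ t) (deriv γ t)| ≤ C * Ψ (γ t) (deriv γ t)) :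
    |action Φ a b γ| ≤ C * action Ψ a b γ := by
  refine (intervalIntegral.abs_integral_le_integral_abs hab).trans ?_
  simp only [action, ← intervalIntegral.integral_const_mul]
  exact intervalIntegral.integral_mono_on hab (intervalIntegrable_action hΦ hγ a b).abs
    ((intervalIntegrable_action hΨ hγ a b).const_mul C) hle

lemma action_fderiv {f : E → ℝ} (hf : ContDiff ℝ 1 f) (hγ : LocallyLipschitz γ) (a b : ℝ) :
    action (fun p v => fderiv ℝ f p v) a b γ = f (γ b) - f (γ a) := by
  refine Eq.trans ?_
    (integral_deriv_of_locallyLipschitz (u := f ∘ γ) (hf.locallyLipschitz.comp hγ) a b)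
  refine intervalIntegral.integral_congr_ae ?_
  filter_upwards [ae_differentiableAt_of_locallyLipschitz hγ] with t ht _
  exact ((hf.differentiable one_ne_zero (γ t)).hasFDerivAt.comp_hasDerivAt t
    ht.hasDerivAt).deriv.symm

lemma norm_sub_le_normLength (hγ : LocallyLipschitz γ) (hab : a ≤ b) :
    ‖γ b - γ a‖ ≤ normLength a b γ := by
  obtain ⟨g, hg, hgγ⟩ := exists_dual_vector'' ℝ (γ b - γ a)
  have hcont : Continuous (Function.uncurry fun p v : E => fderiv ℝ g p v) := by
    simp only [ContinuousLinearMap.fderiv]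
    exact g.continuous.comp continuous_snd
  calc ‖γ b - γ a‖ = g (γ b) - g (γ a) := by rw [← map_sub, hgγ]; rfl
    _ = action (fun p v => fderiv ℝ g p v) a b γ := (action_fderiv g.contDiff hγ a b).symm
    _ ≤ normLength a b γ := by
      refine action_mono hcont continuous_uncurry_norm_snd hγ hab fun t _ => ?_
      rw [ContinuousLinearMap.fderiv]
      exact (le_abs_self _).trans (g.le_of_opNorm_le_of_le hg le_rfl |>.trans_eq (one_mul _))

end Action

/-! ### Reparametrization -/

section Reparametrization

variable {E : Type*} [NormedAddCommGroup E] [NormedSpace ℝ E] {Φ : E → E → ℝ} {γ : ℝ → E}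
  {a b : ℝ}

lemma integral_orderIso_of_lipschitzWith {K : ℝ≥0} (σ : ℝ ≃o ℝ) (hσ : LipschitzWith K σ)
    (f : ℝ → E) (hab : a ≤ b) :
    ∫ s in σ a..σ b, f s = ∫ t in a..b, deriv σ t • f (σ t) := by
  set D : Set ℝ := {t | DifferentiableAt ℝ σ t}
  have hDmeas : MeasurableSet D := measurableSet_of_differentiableAt ℝ σ
  have hDnull : volume Dᶜ = 0 := hσ.ae_differentiableAt_real
  have himnull : volume (σ '' Dᶜ) = 0 := by
    have h := hσ.hausdorffMeasure_image_le (d := 1) zero_le_one Dᶜ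
    rw [hausdorffMeasure_real, hDnull, mul_zero] at h
    exact le_antisymm h bot_le
  have hdom : (Ioc a b ∩ D : Set ℝ) =ᵐ[volume] Ioc a b :=
    inter_ae_eq_left_of_ae_eq_univ (ae_eq_univ.2 hDnull)
  have himage : (σ '' (Ioc a b ∩ D) : Set ℝ) =ᵐ[volume] Ioc (σ a) (σ b) := by
    rw [image_inter σ.injective, σ.image_Ioc]
    refine inter_ae_eq_left_of_ae_eq_univ (ae_eq_univ.2 ?_)
    rwa [← image_compl_eq σ.bijective]
  rw [intervalIntegral.integral_of_le hab, intervalIntegral.integral_of_le (σ.monotone hab),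
    ← setIntegral_congr_set himage, ← setIntegral_congr_set hdom]
  exact integral_image_eq_integral_deriv_smul_of_monotoneOn (measurableSet_Ioc.inter hDmeas)
    (fun t ht => ht.2.hasDerivAt.hasDerivWithinAt) (σ.monotone.monotoneOn _) f

lemma action_comp_orderIso_symm [FiniteDimensional ℝ E] (hΦ : PosHomogeneous Φ) {K : ℝ≥0}
    (σ : ℝ ≃o ℝ) (hσ : LipschitzWith K σ) (hpos : ∀ᵐ t, 0 < deriv σ t)
    (hγ : LocallyLipschitz γ) (hab : a ≤ b) :
    action Φ (σ a) (σ b) (γ ∘ σ.symm) = action Φ a b γ := by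
  refine (integral_orderIso_of_lipschitzWith σ hσ _ hab).trans ?_
  refine intervalIntegral.integral_congr_ae ?_
  filter_upwards [ae_differentiableAt_of_locallyLipschitz hγ, hσ.ae_differentiableAt_real, hpos]
    with t hγt hσt hpost _
  have hsymm : HasDerivAt σ.symm (deriv σ t)⁻¹ (σ t) :=
    HasDerivAt.of_local_left_inverse σ.symm.continuous.continuousAt
      (by rw [σ.symm_apply_apply]; exact hσt.hasDerivAt) hpost.ne'
      (Eventually.of_forall σ.apply_symm_apply)
  have hcomp : HasDerivAt (γ ∘ σ.symm) ((deriv σ t)⁻¹ • deriv γ t) (σ t) :=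
    HasDerivAt.scomp (σ t) (by rw [σ.symm_apply_apply]; exact hγt.hasDerivAt) hsymm
  rw [hcomp.deriv, Function.comp_apply, σ.symm_apply_apply, hΦ _ _ _ (inv_pos.2 hpost),
    smul_eq_mul, mul_inv_cancel_left₀ hpost.ne']

lemma surjective_of_mul_sub_le {σ : ℝ → ℝ} (hσ : Continuous σ) {δ : ℝ} (hδ : 0 < δ)
    (hle : ∀ x y, x ≤ y → δ * (y - x) ≤ σ y - σ x) : Function.Surjective σ := by
  refine hσ.surjective ?_ ?_
  · refine tendsto_atTop_mono' atTop (f₁ := fun y => δ * y + σ 0) ?_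
      (tendsto_atTop_add_const_right _ _ (tendsto_id.const_mul_atTop hδ))
    filter_upwards [eventually_ge_atTop 0] with y hy
    linarith [hle 0 y hy]
  · refine tendsto_atBot_mono' atBot (f₁ := fun y => δ * y + σ 0) ?_
      (tendsto_atBot_add_const_right _ _ (tendsto_id.const_mul_atBot hδ))
    filter_upwards [eventually_le_atBot 0] with y hy
    linarith [hle y 0 hy]

lemma exists_orderIso_sub_eq_integral {g : ℝ → ℝ} (hg : AEStronglyMeasurable g) {δ : ℝ}
    (hδ : 0 < δ) {M : ℝ≥0} (hδg : ∀ t, δ ≤ g t) (hgM : ∀ t, g t ≤ M) (a : ℝ) :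
    ∃ σ : ℝ ≃o ℝ, σ a = 0 ∧ LipschitzWith M σ ∧ (∀ᵐ t, 0 < deriv σ t) ∧
      ∀ x y, σ y - σ x = ∫ t in x..y, g t := by
  have hloc : LocallyIntegrable g :=
    (locallyIntegrable_const (M : ℝ)).mono hg <| .of_forall fun t => by
      rw [Real.norm_of_nonneg (hδ.le.trans (hδg t)), Real.norm_of_nonneg M.coe_nonneg]
      exact hgM t
  have hint : ∀ x y, IntervalIntegrable g volume x y := fun x y =>
    (hloc.integrableOn_isCompact isCompact_uIcc).intervalIntegrable
  set σ : ℝ → ℝ := fun t => ∫ r in a..t, g r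
  have hsub : ∀ x y, σ y - σ x = ∫ t in x..y, g t := fun x y =>
    intervalIntegral.integral_interval_sub_left (hint a y) (hint a x)
  have hlower : ∀ x y, x ≤ y → δ * (y - x) ≤ σ y - σ x := fun x y hxy => by
    have h := intervalIntegral.integral_mono_on hxy intervalIntegrable_const (hint x y)
      fun t _ => hδg t
    rw [intervalIntegral.integral_const, smul_eq_mul] at h
    linarith [hsub x y]
  have hupper : ∀ x y, x ≤ y → σ y - σ x ≤ M * (y - x) := fun x y hxy => by
    have h := intervalIntegral.integral_mono_on hxy (hint x y) intervalIntegrable_const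
      fun t _ => hgM t
    rw [intervalIntegral.integral_const, smul_eq_mul] at h
    linarith [hsub x y]
  have hmono : StrictMono σ := fun x y hxy => by
    linarith [hlower x y hxy.le, mul_pos hδ (sub_pos.2 hxy)]
  have hlip : LipschitzWith M σ := lipschitzWith_of_norm_sub_le fun x y hxy => by
    rw [Real.norm_eq_abs, abs_of_nonneg (sub_nonneg.2 (hmono.monotone hxy))]
    exact hupper x y hxy
  refine ⟨hmono.orderIsoOfSurjective σ (surjective_of_mul_sub_le hlip.continuous hδ hlower),
    intervalIntegral.integral_same, hlip, ?_, hsub⟩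
  filter_upwards [LocallyIntegrable.ae_hasDerivAt_integral hloc] with t ht
  exact (ht a).deriv.symm ▸ hδ.trans_le (hδg t)

lemma exists_isUnitTimeCurve_of_lipschitzWith [FiniteDimensional ℝ E] {K L : ℝ≥0}
    (hγ : LipschitzWith K γ) (hab : a < b) (hL : normLength a b γ ≤ L) :
    ∃ β, IsUnitTimeCurve (L + 1) (γ a) (γ b) β ∧
      ∀ Φ, PosHomogeneous Φ → action Φ 0 1 β = action Φ a b γ := by
  have := FiniteDimensional.complete ℝ E
  have hγ' := hγ.locallyLipschitz
  -- Adding `δ` to the speed keeps the change of parameter bi-Lipschitz where `γ` stops.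
  set δ := 1 / (b - a) with hδ_def
  set T := normLength a b γ + 1 with hT_def
  have hδ : 0 < δ := one_div_pos.2 (sub_pos.2 hab)
  have hT : 0 < T := by linarith [norm_nonneg (γ b - γ a), norm_sub_le_normLength hγ' hab.le]
  have hint : ∀ x y, ∫ t in x..y, (‖deriv γ t‖ + δ) / T =
      (normLength x y γ + (y - x) * δ) / T := fun x y => by
    rw [intervalIntegral.integral_div, intervalIntegral.integral_add
      (intervalIntegrable_action continuous_uncurry_norm_snd hγ' x y) intervalIntegrable_const,
      intervalIntegral.integral_const, smul_eq_mul]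
    rfl
  obtain ⟨σ, hσa, hσlip, hσpos, hσ⟩ := exists_orderIso_sub_eq_integral
    (g := fun t => (‖deriv γ t‖ + δ) / T) (M := ((K + δ) / T).toNNReal)
    ((stronglyMeasurable_deriv γ).norm.measurable.add_const δ |>.div_const T).aestronglyMeasurable
    (div_pos hδ hT)
    (fun t => by gcongr; linarith [norm_nonneg (deriv γ t)])
    (fun t => (Real.le_coe_toNNReal _).trans' (by
      gcongr
      exact norm_deriv_le_of_lipschitz hγ)) a
  have hσb : σ b = 1 := by
    rw [← sub_zero (σ b), ← hσa, hσ, hint, hδ_def, mul_one_div_cancel (sub_pos.2 hab).ne',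
      ← hT_def, div_self hT.ne']
  refine ⟨γ ∘ σ.symm, ⟨lipschitzWith_of_norm_sub_le fun x y hxy => ?_, ?_, ?_⟩, fun Φ hΦ => ?_⟩
  · have hst := σ.symm.monotone hxy
    have hlen := hσ (σ.symm x) (σ.symm y)
    rw [hint, σ.apply_symm_apply, σ.apply_symm_apply, eq_div_iff hT.ne'] at hlen
    calc ‖γ (σ.symm y) - γ (σ.symm x)‖ ≤ normLength (σ.symm x) (σ.symm y) γ :=
          norm_sub_le_normLength hγ' hst
      _ ≤ (y - x) * T := by rw [hlen]; linarith [mul_nonneg (sub_nonneg.2 hst) hδ.le]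
      _ ≤ (L + 1 : ℝ≥0) * (y - x) := by
        rw [mul_comm]
        push_cast
        exact mul_le_mul_of_nonneg_right (by linarith) (sub_nonneg.2 hxy)
  · rw [Function.comp_apply, ← hσa, σ.symm_apply_apply]
  · rw [Function.comp_apply, ← hσb, σ.symm_apply_apply]
  · rw [← action_comp_orderIso_symm hΦ σ hσlip hσpos hγ' hab.le, hσa, hσb]

lemma exists_isUnitTimeCurve_action_eq [FiniteDimensional ℝ E] (hγ : LocallyLipschitz γ)
    (hab : a < b) {L : ℝ≥0} (hL : normLength a b γ ≤ L) :
    ∃ β, IsUnitTimeCurve (L + 1) (γ a) (γ b) β ∧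
      ∀ Φ, PosHomogeneous Φ → action Φ 0 1 β = action Φ a b γ := by
  obtain ⟨K, η, hη, heq⟩ := exists_lipschitzWith_eqOn_Icc hγ hab.le
  have hact : ∀ Φ, action Φ a b η = action Φ a b γ := fun Φ =>
    action_congr_of_eqOn_Ioo hab.le (heq.mono Ioo_subset_Icc_self)
  rw [← heq (left_mem_Icc.2 hab.le), ← heq (right_mem_Icc.2 hab.le)]
  simp only [← hact]
  exact exists_isUnitTimeCurve_of_lipschitzWith hη hab ((hact _).trans_le hL)

end Reparametrization

/-! ### Weak convergence of derivatives and lower semicontinuity -/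

section WeakConvergence

variable {E ι : Type*} [NormedAddCommGroup E] [NormedSpace ℝ E] {l : Filter ι} {L : ℝ≥0} {a b : ℝ}

lemma tendsto_intervalIntegral_zero_of_tendstoUniformlyOn {f : ι → ℝ → ℝ}
    (hab : a ≤ b) (hf : TendstoUniformlyOn f 0 l (Icc a b)) :
    Tendsto (fun i => ∫ t in a..b, f i t) l (𝓝 0) := by
  refine Metric.tendsto_nhds.2 fun ε hε => ?_
  have hη : 0 < ε / (|b - a| + 1) := by positivity
  filter_upwards [Metric.tendstoUniformlyOn_iff.1 hf _ hη] with i hi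
  have hbound : ‖∫ t in a..b, f i t‖ ≤ ε / (|b - a| + 1) * |b - a| := by
    refine intervalIntegral.norm_integral_le_of_norm_le_const fun t ht => ?_
    rw [uIoc_of_le hab] at ht
    simpa only [Pi.zero_apply, dist_zero_left] using (hi t (Ioc_subset_Icc_self ht)).le
  rw [dist_zero_right]
  refine hbound.trans_lt ?_
  rw [div_mul_eq_mul_div, div_lt_iff₀ (by positivity)]
  exact mul_lt_mul_of_pos_left (lt_add_one _) hε

lemma exists_contDiff_integral_norm_sub_le {ξ : ℝ → E →L[ℝ] ℝ}
    (hξ : IntervalIntegrable ξ volume a b) (hab : a ≤ b) {ε : ℝ} (hε : 0 < ε) :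
    ∃ φ : ℝ → E →L[ℝ] ℝ, ContDiff ℝ 1 φ ∧ ∫ t in a..b, ‖ξ t - φ t‖ ≤ ε := by
  have hmem : MemLp ξ 1 (volume.restrict (Ioc a b)) := memLp_one_iff_integrable.2 hξ.1
  obtain ⟨φ, -, hφ, hle⟩ := hmem.exist_eLpNorm_sub_le ENNReal.one_ne_top le_rfl hε
  have hint : Integrable (ξ - φ) (volume.restrict (Ioc a b)) :=
    hξ.1.sub (hφ.continuous.intervalIntegrable a b).1
  refine ⟨φ, hφ.of_le (mod_cast le_top), ?_⟩
  rw [intervalIntegral.integral_of_le hab]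
  rw [eLpNorm_one_eq_lintegral_enorm] at hle
  refine (ENNReal.ofReal_le_ofReal_iff hε.le).1 ?_
  exact (ofReal_integral_norm_eq_lintegral_enorm hint).trans_le hle

variable [FiniteDimensional ℝ E]

lemma intervalIntegrable_apply_deriv {ξ : ℝ → E →L[ℝ] ℝ} (hξ : IntervalIntegrable ξ volume a b)
    {w : ℝ → E} (hw : LipschitzWith L w) :
    IntervalIntegrable (fun t => ξ t (deriv w t)) volume a b := by
  have := FiniteDimensional.complete ℝ E
  refine (hξ.norm.mul_const (L : ℝ)).mono_fun' ?_ (Eventually.of_forall fun t => ?_)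
  · exact isBoundedBilinearMap_apply.continuous.comp_aestronglyMeasurable
      (hξ.def'.aestronglyMeasurable.prodMk (stronglyMeasurable_deriv w).aestronglyMeasurable)
  · exact (ξ t).le_opNorm_of_le (norm_deriv_le_of_lipschitz hw)

lemma integral_apply_deriv_eq_sub {ξ : ℝ → E →L[ℝ] ℝ} (hξ : ContDiff ℝ 1 ξ) {w : ℝ → E}
    (hw : LipschitzWith L w) (a b : ℝ) :
    ∫ t in a..b, ξ t (deriv w t) = ξ b (w b) - ξ a (w a) - ∫ t in a..b, deriv ξ t (w t) := by
  have hpair : LocallyLipschitz fun t => ξ t (w t) :=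
    (isBoundedBilinearMap_apply (𝕜 := ℝ) (E := E) (F := ℝ)).contDiff.locallyLipschitz.comp
      (hξ.locallyLipschitz.prodMk hw.locallyLipschitz)
  have hderiv : ∀ᵐ t, deriv (fun s => ξ s (w s)) t = deriv ξ t (w t) + ξ t (deriv w t) := by
    filter_upwards [ae_differentiableAt_of_locallyLipschitz hw.locallyLipschitz] with t ht
    exact ((hξ.differentiable one_ne_zero t).hasDerivAt.clm_apply ht.hasDerivAt).deriv
  have hcont : Continuous fun t => deriv ξ t (w t) :=
    (hξ.continuous_deriv le_rfl).clm_apply hw.continuous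
  rw [eq_sub_iff_add_eq', ← integral_deriv_of_locallyLipschitz hpair a b,
    ← intervalIntegral.integral_add (hcont.intervalIntegrable a b)
      (intervalIntegrable_apply_deriv (hξ.continuous.intervalIntegrable a b) hw)]
  exact intervalIntegral.integral_congr_ae (hderiv.mono fun t ht _ => ht.symm)

lemma tendsto_integral_apply_deriv_of_contDiff {ξ : ℝ → E →L[ℝ] ℝ} (hξ : ContDiff ℝ 1 ξ)
    {w : ι → ℝ → E} (hw : ∀ᶠ i in l, LipschitzWith L (w i)) (hab : a ≤ b)
    (hlim : TendstoUniformlyOn w 0 l (Icc a b)) :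
    Tendsto (fun i => ∫ t in a..b, ξ t (deriv (w i) t)) l (𝓝 0) := by
  have hpoint : ∀ t ∈ Icc a b, Tendsto (fun i => ξ t (w i t)) l (𝓝 0) := fun t ht => by
    simpa only [Pi.zero_apply, map_zero, Function.comp_def] using
      ((ξ t).continuous.tendsto 0).comp (hlim.tendsto_at ht)
  obtain ⟨M, hM⟩ := isCompact_Icc.exists_bound_of_continuousOn
    (hξ.continuous_deriv le_rfl).continuousOn (s := Icc a b)
  have huniform : TendstoUniformlyOn (fun i t => deriv ξ t (w i t)) 0 l (Icc a b) := by
    refine Metric.tendstoUniformlyOn_iff.2 fun ε hε => ?_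
    have hη : 0 < ε / (|M| + 1) := by positivity
    filter_upwards [Metric.tendstoUniformlyOn_iff.1 hlim _ hη] with i hi t ht
    have hwt := hi t ht
    simp only [Pi.zero_apply, dist_zero_left] at hwt ⊢
    calc ‖deriv ξ t (w i t)‖ ≤ (|M| + 1) * ‖w i t‖ :=
          (deriv ξ t).le_of_opNorm_le ((hM t ht).trans (by linarith [le_abs_self M])) _
      _ < (|M| + 1) * (ε / (|M| + 1)) := by gcongr
      _ = ε := by field_simp
  have hparts := ((hpoint b (right_mem_Icc.2 hab)).sub (hpoint a (left_mem_Icc.2 hab))).sub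
    (tendsto_intervalIntegral_zero_of_tendstoUniformlyOn hab huniform)
  rw [sub_zero, sub_zero] at hparts
  exact hparts.congr' (hw.mono fun i hi => (integral_apply_deriv_eq_sub hξ hi a b).symm)

lemma tendsto_integral_apply_deriv {ξ : ℝ → E →L[ℝ] ℝ} (hξ : IntervalIntegrable ξ volume a b)
    {w : ι → ℝ → E} (hw : ∀ᶠ i in l, LipschitzWith L (w i)) (hab : a ≤ b)
    (hlim : TendstoUniformlyOn w 0 l (Icc a b)) :
    Tendsto (fun i => ∫ t in a..b, ξ t (deriv (w i) t)) l (𝓝 0) := by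
  refine Metric.tendsto_nhds.2 fun ε hε => ?_
  obtain ⟨φ, hφ, hφξ⟩ := exists_contDiff_integral_norm_sub_le hξ hab
    (ε := ε / (2 * (L + 1))) (by positivity)
  have hφi := hφ.continuous.intervalIntegrable (μ := volume) a b
  have hsmooth := tendsto_integral_apply_deriv_of_contDiff hφ hw hab hlim
  filter_upwards [hw, Metric.tendsto_nhds.1 hsmooth (ε / 2) (half_pos hε)] with i hi hclose
  rw [dist_zero_right] at hclose ⊢
  have herror : ‖∫ t in a..b, (ξ t - φ t) (deriv (w i) t)‖ ≤ ε / 2 := by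
    calc ‖∫ t in a..b, (ξ t - φ t) (deriv (w i) t)‖
        ≤ ∫ t in a..b, ‖ξ t - φ t‖ * L :=
          intervalIntegral.norm_integral_le_of_norm_le hab (Eventually.of_forall fun t _ =>
            (ξ t - φ t).le_opNorm_of_le (norm_deriv_le_of_lipschitz hi))
            ((hξ.sub hφi).norm.mul_const _)
      _ ≤ ε / (2 * (L + 1)) * (L + 1) := by
          rw [intervalIntegral.integral_mul_const]
          gcongr
          exact (lt_add_one _).le
      _ = ε / 2 := by field_simp
  have hsplit : ∫ t in a..b, ξ t (deriv (w i) t) =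
      (∫ t in a..b, (ξ t - φ t) (deriv (w i) t)) + ∫ t in a..b, φ t (deriv (w i) t) := by
    rw [← intervalIntegral.integral_add (intervalIntegrable_apply_deriv (hξ.sub hφi) hi)
      (intervalIntegrable_apply_deriv hφi hi)]
    simp only [sub_apply, sub_add_cancel]
  rw [hsplit]
  linarith [norm_add_le (∫ t in a..b, (ξ t - φ t) (deriv (w i) t))
    (∫ t in a..b, φ t (deriv (w i) t))]

section LowerSemicontinuity

variable {Φ : E → E → ℝ} {γ : ℝ → E} {β : ι → ℝ → E}

lemma tendstoUniformlyOn_lagrangian_sub_frozen (hΦ : Continuous (Function.uncurry Φ))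
    (hγ : Continuous γ) (hβ : ∀ᶠ i in l, LipschitzWith L (β i))
    (hlim : TendstoUniformlyOn β γ l (Icc a b)) :
    TendstoUniformlyOn
      (fun i t => Φ (β i t) (deriv (β i) t) - Φ (γ t) (deriv (β i) t)) 0 l (Icc a b) := by
  have := FiniteDimensional.proper ℝ E
  have hcompact : IsCompact
      (Metric.cthickening 1 (γ '' Icc a b) ×ˢ Metric.closedBall (0 : E) L) :=
    (isCompact_Icc.image hγ).cthickening.prod (isCompact_closedBall _ _)
  have huc := Metric.uniformContinuousOn_iff.1
    (hcompact.uniformContinuousOn_of_continuous hΦ.continuousOn)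
  refine Metric.tendstoUniformlyOn_iff.2 fun ε hε => ?_
  obtain ⟨δ, hδ, hδε⟩ := huc ε hε
  filter_upwards [hβ, Metric.tendstoUniformlyOn_iff.1 hlim _ (lt_min hδ one_pos)] with i hi hclose
  intro t ht
  have hdist := hclose t ht
  have hγt : γ t ∈ γ '' Icc a b := mem_image_of_mem γ ht
  have hspeed : deriv (β i) t ∈ Metric.closedBall (0 : E) L :=
    mem_closedBall_zero_iff.2 (norm_deriv_le_of_lipschitz hi)
  have hmem : β i t ∈ Metric.cthickening 1 (γ '' Icc a b) :=
    Metric.mem_cthickening_of_dist_le _ _ _ _ hγt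
      (by rw [dist_comm]; exact (hdist.trans_le (min_le_right _ _)).le)
  rw [Pi.zero_apply, dist_zero_left, ← dist_eq_norm, dist_comm]
  refine hδε (γ t, deriv (β i) t) ⟨Metric.self_subset_cthickening _ hγt, hspeed⟩
    (β i t, deriv (β i) t) ⟨hmem, hspeed⟩ ?_
  rw [Prod.dist_eq, dist_self, max_eq_left dist_nonneg]
  exact hdist.trans_le (min_le_left _ _)

lemma tendsto_integral_apply_deriv_of_tendstoUniformlyOn {ξ : ℝ → E →L[ℝ] ℝ}
    (hξ : IntervalIntegrable ξ volume a b) (hγ : LipschitzWith L γ)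
    (hβ : ∀ᶠ i in l, LipschitzWith L (β i)) (hab : a ≤ b)
    (hlim : TendstoUniformlyOn β γ l (Icc a b)) :
    Tendsto (fun i => ∫ t in a..b, ξ t (deriv (β i) t)) l
      (𝓝 (∫ t in a..b, ξ t (deriv γ t))) := by
  have hdiff : TendstoUniformlyOn (fun i => β i - γ) 0 l (Icc a b) := by
    refine Metric.tendstoUniformlyOn_iff.2 fun ε hε => ?_
    filter_upwards [Metric.tendstoUniformlyOn_iff.1 hlim ε hε] with i hi t ht
    rw [Pi.zero_apply, dist_zero_left, Pi.sub_apply, ← dist_eq_norm, dist_comm]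
    exact hi t ht
  have hzero := tendsto_integral_apply_deriv hξ (hβ.mono fun i hi => hi.sub hγ) hab hdiff
  have hsum := hzero.add_const (∫ t in a..b, ξ t (deriv γ t))
  rw [zero_add] at hsum
  refine hsum.congr' (hβ.mono fun i hi => ?_)
  rw [← intervalIntegral.integral_add (intervalIntegrable_apply_deriv hξ (hi.sub hγ))
    (intervalIntegrable_apply_deriv hξ hγ)]
  refine intervalIntegral.integral_congr_ae ?_
  filter_upwards [ae_differentiableAt_of_locallyLipschitz hγ.locallyLipschitz,
    ae_differentiableAt_of_locallyLipschitz hi.locallyLipschitz] with t hγt hβt _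
  rw [deriv_fun_sub hβt hγt, map_sub, sub_add_cancel]

-- Freezing the position at `γ` costs little; the frozen action is bounded below by the pairing
-- with the calibration `ξ`, which is linear in the velocity and so passes to the limit.
lemma eventually_lt_action_of_calibration (hΦ : Continuous (Function.uncurry Φ))
    (hγ : LipschitzWith L γ) (hβ : ∀ᶠ i in l, LipschitzWith L (β i)) (hab : a ≤ b)
    (hlim : TendstoUniformlyOn β γ l (Icc a b)) {ξ : ℝ → E →L[ℝ] ℝ}
    (hξ : IntervalIntegrable ξ volume a b) (hle : ∀ t v, ξ t v ≤ Φ (γ t) v)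
    (heq : ∀ t, ξ t (deriv γ t) = Φ (γ t) (deriv γ t)) {y : ℝ} (hy : y < action Φ a b γ) :
    ∀ᶠ i in l, y < action Φ a b (β i) := by
  have hfrozen := tendsto_intervalIntegral_zero_of_tendstoUniformlyOn hab
    (tendstoUniformlyOn_lagrangian_sub_frozen hΦ hγ.continuous hβ hlim)
  have hlower := hfrozen.add
    (tendsto_integral_apply_deriv_of_tendstoUniformlyOn hξ hγ hβ hab hlim)
  simp only [heq, zero_add] at hlower
  filter_upwards [hβ, hlower.eventually_const_lt hy] with i hi hyi
  refine hyi.trans_le ?_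
  have := FiniteDimensional.complete ℝ E
  have hint := intervalIntegrable_action hΦ hi.locallyLipschitz a b
  have hintξ := intervalIntegrable_apply_deriv hξ hi
  have hintFrozen : IntervalIntegrable
      (fun t => Φ (β i t) (deriv (β i) t) - Φ (γ t) (deriv (β i) t)) volume a b :=
    hint.sub (intervalIntegrable_lagrangian hΦ hγ.continuous (stronglyMeasurable_deriv (β i))
      fun _ _ => norm_deriv_le_of_lipschitz hi)
  rw [← intervalIntegral.integral_add hintFrozen hintξ]
  refine intervalIntegral.integral_mono_on hab (hintFrozen.add hintξ) hint fun t _ => ?_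
  linarith [hle t (deriv (β i) t)]

end LowerSemicontinuity

end WeakConvergence

/-! ### Compactness of Lipschitz curves with prescribed endpoints -/

section Compactness

variable {E : Type*} [NormedAddCommGroup E] {Λ : ℝ≥0} {p q : E} {γ : ℝ → E}

local notation "I" => Icc (0 : ℝ) 1

/-- Restrictions to `[0, 1]` of the curves in `IsUnitTimeCurve Λ p q`, as a set of bounded
continuous functions to which the Arzelà–Ascoli theorem applies. -/
def unitTimeRestrictions (Λ : ℝ≥0) (p q : E) : Set (BoundedContinuousFunction I E) :=
  {f | (∀ x y, dist (f x) (f y) ≤ Λ * dist x y) ∧ f 0 = p ∧ f 1 = q}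

lemma isClosed_unitTimeRestrictions : IsClosed (unitTimeRestrictions Λ p q) := by
  have heval (x : I) : Continuous fun f : BoundedContinuousFunction I E => f x :=
    (BoundedContinuousFunction.lipschitz_eval_const x).continuous
  refine IsClosed.and ?_ ((isClosed_eq (heval 0) continuous_const).and
    (isClosed_eq (heval 1) continuous_const))
  simp only [Set.ofPred_forall]
  exact isClosed_iInter fun x => isClosed_iInter fun y =>
    isClosed_le ((heval x).dist (heval y)) continuous_const

lemma isCompact_unitTimeRestrictions [ProperSpace E] :
    IsCompact (unitTimeRestrictions Λ p q) := by
  refine BoundedContinuousFunction.arzela_ascoli₂ (Metric.closedBall p Λ)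
    (isCompact_closedBall _ _) _ isClosed_unitTimeRestrictions ?_ ?_
  · intro f x hf
    have hdist : dist x 0 ≤ 1 := by
      rw [Subtype.dist_eq, Real.dist_eq, Icc.coe_zero, sub_zero, abs_of_nonneg x.2.1]
      exact x.2.2
    rw [Metric.mem_closedBall, ← hf.2.1]
    exact (hf.1 x 0).trans (mul_le_of_le_one_right Λ.2 hdist)
  · exact Metric.equicontinuous_of_continuity_modulus (fun r => Λ * r)
      (Continuous.tendsto' (by fun_prop) _ _ (mul_zero _)) _ fun x y f => f.2.1 x y

lemma isUnitTimeCurve_IccExtend {f : BoundedContinuousFunction I E}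
    (hf : f ∈ unitTimeRestrictions Λ p q) :
    IsUnitTimeCurve Λ p q (IccExtend zero_le_one f) where
  lipschitzWith := mul_one Λ ▸
    (LipschitzWith.of_dist_le_mul hf.1).comp (LipschitzWith.projIcc (zero_le_one (α := ℝ)))
  apply_zero := (IccExtend_left _ _).trans hf.2.1
  apply_one := (IccExtend_right _ _).trans hf.2.2

lemma exists_mem_unitTimeRestrictions (hγ : IsUnitTimeCurve Λ p q γ) :
    ∃ f ∈ unitTimeRestrictions Λ p q, EqOn (IccExtend zero_le_one f) γ I := by
  let f : BoundedContinuousFunction I E := BoundedContinuousFunction.mkOfCompact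
    ⟨fun x : I => γ x, hγ.lipschitzWith.continuous.comp continuous_subtype_val⟩
  exact ⟨f, ⟨fun x y => hγ.lipschitzWith.dist_le_mul x y, hγ.apply_zero, hγ.apply_one⟩,
    fun t ht => IccExtend_of_mem _ _ ht⟩

lemma tendstoUniformlyOn_IccExtend (f : BoundedContinuousFunction I E) :
    TendstoUniformlyOn (fun g : BoundedContinuousFunction I E => IccExtend zero_le_one g)
      (IccExtend zero_le_one f) (𝓝 f) I := by
  refine Metric.tendstoUniformlyOn_iff.2 fun ε hε => ?_
  filter_upwards [Metric.ball_mem_nhds f hε] with g hg t ht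
  rw [IccExtend_of_mem _ _ ht, IccExtend_of_mem _ _ ht, dist_comm]
  exact (BoundedContinuousFunction.dist_coe_le_dist _).trans_lt hg

lemma exists_isUnitTimeCurve_forall_le [ProperSpace E] {G : (ℝ → E) → ℝ}
    (hcongr : ∀ γ β, EqOn γ β I → G γ = G β)
    (hlsc : ∀ γ, IsUnitTimeCurve Λ p q γ → ∀ l : Filter (ℝ → E),
      (∀ᶠ β in l, IsUnitTimeCurve Λ p q β) → TendstoUniformlyOn id γ l I →
        ∀ y < G γ, ∀ᶠ β in l, y < G β)
    (hne : ∃ γ, IsUnitTimeCurve Λ p q γ) :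
    ∃ γ, IsUnitTimeCurve Λ p q γ ∧ ∀ β, IsUnitTimeCurve Λ p q β → G γ ≤ G β := by
  let extend (f : BoundedContinuousFunction I E) : ℝ → E := IccExtend zero_le_one f
  have hlscOn : LowerSemicontinuousOn (fun f => G (extend f)) (unitTimeRestrictions Λ p q) := by
    intro f hf y hy
    refine eventually_map.1 (hlsc _ (isUnitTimeCurve_IccExtend hf)
      (map extend (𝓝[unitTimeRestrictions Λ p q] f)) ?_ ?_ y hy)
    · exact eventually_map.2
        (eventually_mem_nhdsWithin.mono fun g hg => isUnitTimeCurve_IccExtend hg)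
    · exact fun u hu => (tendstoUniformlyOn_IccExtend f u hu).filter_mono nhdsWithin_le_nhds
  obtain ⟨γ₀, hγ₀⟩ := hne
  obtain ⟨f₀, hf₀, -⟩ := exists_mem_unitTimeRestrictions hγ₀
  obtain ⟨f, hf, hmin⟩ :=
    LowerSemicontinuousOn.exists_isMinOn ⟨f₀, hf₀⟩ isCompact_unitTimeRestrictions hlscOn
  refine ⟨extend f, isUnitTimeCurve_IccExtend hf, fun β hβ => ?_⟩
  obtain ⟨g, hg, hgβ⟩ := exists_mem_unitTimeRestrictions hβ
  exact (hmin hg).trans_eq (hcongr _ _ hgβ)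

end Compactness

/-! ### The Euclidean norm and the planar Lagrangians -/

section PlanarLagrangians

lemma enorm2_nonneg (v : ℝ × ℝ) : 0 ≤ enorm2 v := Real.sqrt_nonneg _

lemma continuous_enorm2 : Continuous enorm2 := by
  unfold enorm2
  fun_prop

lemma enorm2_sq (v : ℝ × ℝ) : enorm2 v ^ 2 = v.1 ^ 2 + v.2 ^ 2 := Real.sq_sqrt (by positivity)

lemma norm_le_enorm2 (v : ℝ × ℝ) : ‖v‖ ≤ enorm2 v :=
  max_le (Real.abs_le_sqrt (by linarith [sq_nonneg v.2]))
    (Real.abs_le_sqrt (by linarith [sq_nonneg v.1]))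

lemma enorm2_le_two_mul_norm (v : ℝ × ℝ) : enorm2 v ≤ 2 * ‖v‖ := by
  have hfst : v.1 ^ 2 ≤ ‖v‖ ^ 2 := sq_le_sq.2 ((norm_fst_le v).trans (le_abs_self _))
  have hsnd : v.2 ^ 2 ≤ ‖v‖ ^ 2 := sq_le_sq.2 ((norm_snd_le v).trans (le_abs_self _))
  exact Real.sqrt_le_iff.2 ⟨by positivity, by nlinarith [sq_nonneg ‖v‖]⟩

lemma enorm2_smul_of_pos {r : ℝ} (hr : 0 < r) (v : ℝ × ℝ) : enorm2 (r • v) = r * enorm2 v := by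
  rw [enorm2, enorm2, ← Real.sqrt_sq hr.le, ← Real.sqrt_mul (sq_nonneg r), Real.sqrt_sq hr.le]
  congr 1
  simp only [Prod.smul_fst, Prod.smul_snd, smul_eq_mul]
  ring

lemma dot_le_enorm2_mul_enorm2 (u v : ℝ × ℝ) :
    u.1 * v.1 + u.2 * v.2 ≤ enorm2 u * enorm2 v := by
  rw [enorm2, enorm2, ← Real.sqrt_mul (by positivity)]
  exact Real.le_sqrt_of_sq_le (by nlinarith [sq_nonneg (u.1 * v.2 - u.2 * v.1)])

/-- The linear form `v ↦ u · v` on the Euclidean plane. -/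
def dotForm (u : ℝ × ℝ) : ℝ × ℝ →L[ℝ] ℝ :=
  u.1 • ContinuousLinearMap.fst ℝ ℝ ℝ + u.2 • ContinuousLinearMap.snd ℝ ℝ ℝ

lemma dotForm_apply (u v : ℝ × ℝ) : dotForm u v = u.1 * v.1 + u.2 * v.2 := rfl

lemma continuous_dotForm : Continuous dotForm := by
  unfold dotForm
  fun_prop

/-- The Lagrangian `F(p)|v|`, whose action is the degenerate length `degLen F`. -/
def lengthDensity (F : ℝ × ℝ → ℝ) (p v : ℝ × ℝ) : ℝ := F p * enorm2 v

/-- The Lagrangian `p¹v²`, whose action along a locally Lipschitz curve is the signed area. -/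
def areaDensity (p v : ℝ × ℝ) : ℝ := p.1 * v.2

variable {F : ℝ × ℝ → ℝ}

lemma continuous_lengthDensity (hF : Continuous F) :
    Continuous (Function.uncurry (lengthDensity F)) :=
  (hF.comp continuous_fst).mul (continuous_enorm2.comp continuous_snd)

lemma lengthDensity_nonneg (hF₀ : ∀ p, 0 ≤ F p) (p v : ℝ × ℝ) : 0 ≤ lengthDensity F p v :=
  mul_nonneg (hF₀ p) (enorm2_nonneg v)

lemma posHomogeneous_lengthDensity : PosHomogeneous (lengthDensity F) := fun p v r hr => by
  rw [lengthDensity, enorm2_smul_of_pos hr, lengthDensity, mul_left_comm]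

lemma continuous_areaDensity : Continuous (Function.uncurry areaDensity) :=
  continuous_fst.fst.mul continuous_snd.snd

lemma posHomogeneous_areaDensity : PosHomogeneous areaDensity := fun _ _ _ _ =>
  mul_left_comm _ _ _

lemma sArea_eq_action {γ : ℝ → ℝ × ℝ} (hγ : LocallyLipschitz γ) (a b : ℝ) :
    sArea a b γ = action areaDensity a b γ := by
  refine intervalIntegral.integral_congr_ae ?_
  filter_upwards [ae_differentiableAt_of_locallyLipschitz hγ] with t ht _
  have hsnd : HasDerivAt (fun s => (γ s).2) (deriv γ t).2 t :=
    (hasFDerivAt_snd (𝕜 := ℝ) (p := γ t)).comp_hasDerivAt t ht.hasDerivAt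
  rw [hsnd.deriv, areaDensity]

end PlanarLagrangians

/-! ### Minimizers of the penalized functional with a Lipschitz bound -/

section Penalized

variable {ι : Type*} {l : Filter ι} {L : ℝ≥0} {a b : ℝ} {F : ℝ × ℝ → ℝ} {γ : ℝ → ℝ × ℝ}
  {β : ι → ℝ → ℝ × ℝ}

/-- The form `F(γ) γ'/|γ'|` (zero where `γ' = 0`), which calibrates `lengthDensity F` along `γ`. -/
def tangentForm (F : ℝ × ℝ → ℝ) (γ : ℝ → ℝ × ℝ) (t : ℝ) : ℝ × ℝ →L[ℝ] ℝ :=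
  F (γ t) • dotForm ((enorm2 (deriv γ t))⁻¹ • deriv γ t)

lemma enorm2_inv_smul_self_le (v : ℝ × ℝ) : enorm2 ((enorm2 v)⁻¹ • v) ≤ 1 := by
  rcases (enorm2_nonneg v).eq_or_lt with hv | hv
  · rw [← hv, inv_zero, zero_smul]
    simp [enorm2]
  · rw [enorm2_smul_of_pos (inv_pos.2 hv), inv_mul_cancel₀ hv.ne']

lemma dotForm_inv_smul_self (v : ℝ × ℝ) : dotForm ((enorm2 v)⁻¹ • v) v = enorm2 v := by
  have hsq := enorm2_sq v
  simp only [dotForm_apply, Prod.smul_fst, Prod.smul_snd, smul_eq_mul]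
  rcases eq_or_ne (enorm2 v) 0 with hv | hv
  · simp [hv]
  · field_simp
    linarith

lemma tangentForm_le (hF₀ : ∀ p, 0 ≤ F p) (t : ℝ) (v : ℝ × ℝ) :
    tangentForm F γ t v ≤ lengthDensity F (γ t) v := by
  refine mul_le_mul_of_nonneg_left ?_ (hF₀ (γ t))
  exact (dot_le_enorm2_mul_enorm2 _ v).trans
    (mul_le_of_le_one_left (enorm2_nonneg v) (enorm2_inv_smul_self_le _))

lemma tangentForm_deriv (t : ℝ) :
    tangentForm F γ t (deriv γ t) = lengthDensity F (γ t) (deriv γ t) :=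
  congrArg (F (γ t) * ·) (dotForm_inv_smul_self (deriv γ t))

lemma intervalIntegrable_tangentForm (hF : Continuous F) (hγ : Continuous γ) :
    IntervalIntegrable (tangentForm F γ) volume a b := by
  have hspeed := continuous_enorm2.measurable.comp (measurable_deriv γ)
  have hunit : Measurable fun t => (enorm2 (deriv γ t))⁻¹ • deriv γ t :=
    hspeed.inv.smul (measurable_deriv γ)
  have hmem (t : ℝ) : (enorm2 (deriv γ t))⁻¹ • deriv γ t ∈ Metric.closedBall (0 : ℝ × ℝ) 1 :=
    mem_closedBall_zero_iff.2 ((norm_le_enorm2 _).trans (enorm2_inv_smul_self_le _))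
  obtain ⟨M, hM⟩ := (isCompact_closedBall (0 : ℝ × ℝ) 1).exists_bound_of_continuousOn
    continuous_dotForm.continuousOn
  have hFγ := hF.comp hγ
  refine ((hFγ.intervalIntegrable a b).norm.mul_const M).mono_fun' ?_
    (Eventually.of_forall fun t => ?_)
  · exact hFγ.aestronglyMeasurable.smul
      (continuous_dotForm.comp_stronglyMeasurable hunit.stronglyMeasurable).aestronglyMeasurable
  · exact (norm_smul_le _ _).trans (mul_le_mul_of_nonneg_left (hM _ (hmem t)) (norm_nonneg _))

lemma eventually_lt_action_lengthDensity (hF : Continuous F) (hF₀ : ∀ p, 0 ≤ F p)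
    (hγ : LipschitzWith L γ) (hβ : ∀ᶠ i in l, LipschitzWith L (β i)) (hab : a ≤ b)
    (hlim : TendstoUniformlyOn β γ l (Icc a b)) {y : ℝ}
    (hy : y < action (lengthDensity F) a b γ) :
    ∀ᶠ i in l, y < action (lengthDensity F) a b (β i) :=
  eventually_lt_action_of_calibration (continuous_lengthDensity hF) hγ hβ hab hlim
    (intervalIntegrable_tangentForm hF hγ.continuous) (tangentForm_le hF₀) tangentForm_deriv hy

-- Both `areaDensity` and its negative are linear in the velocity, hence calibrated by themselves.
lemma tendsto_action_areaDensity (hγ : LipschitzWith L γ)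
    (hβ : ∀ᶠ i in l, LipschitzWith L (β i)) (hab : a ≤ b)
    (hlim : TendstoUniformlyOn β γ l (Icc a b)) :
    Tendsto (fun i => action areaDensity a b (β i)) l (𝓝 (action areaDensity a b γ)) := by
  have hξ : Continuous fun t => (γ t).1 • ContinuousLinearMap.snd ℝ ℝ ℝ :=
    hγ.continuous.fst.smul continuous_const
  have hneg (δ : ℝ → ℝ × ℝ) :
      action (fun p v => -areaDensity p v) a b δ = -action areaDensity a b δ :=
    intervalIntegral.integral_neg
  refine tendsto_order.2 ⟨fun y hy => ?_, fun y hy => ?_⟩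
  · exact eventually_lt_action_of_calibration continuous_areaDensity hγ hβ hab hlim
      (hξ.intervalIntegrable a b) (fun _ _ => le_rfl) (fun _ => rfl) hy
  · have hlt := eventually_lt_action_of_calibration (Φ := fun p v => -areaDensity p v)
      continuous_areaDensity.neg hγ hβ hab hlim (hξ.neg.intervalIntegrable a b)
      (fun _ _ => le_rfl) (fun _ => rfl) (y := -y) (by rw [hneg]; linarith)
    exact hlt.mono fun i hi => by rw [hneg] at hi; linarith

/-- The degenerate length with a penalty of slope `κ` on the deviation of the signed area
from `A`. -/
def penalized (F : ℝ × ℝ → ℝ) (κ A a b : ℝ) (γ : ℝ → ℝ × ℝ) : ℝ :=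
  action (lengthDensity F) a b γ + κ * |action areaDensity a b γ - A|

lemma eventually_lt_penalized (hF : Continuous F) (hF₀ : ∀ p, 0 ≤ F p) {κ A : ℝ}
    (hγ : LipschitzWith L γ) (hβ : ∀ᶠ i in l, LipschitzWith L (β i)) (hab : a ≤ b)
    (hlim : TendstoUniformlyOn β γ l (Icc a b)) {y : ℝ} (hy : y < penalized F κ A a b γ) :
    ∀ᶠ i in l, y < penalized F κ A a b (β i) := by
  have hpenalty := (((tendsto_action_areaDensity hγ hβ hab hlim).sub_const A).abs).const_mul κ
  rw [penalized, ← sub_lt_iff_lt_add] at hy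
  obtain ⟨z, hyz, hz⟩ := exists_between hy
  filter_upwards [eventually_lt_action_lengthDensity hF hF₀ hγ hβ hab hlim hz,
    hpenalty.eventually_const_lt (sub_lt_comm.1 hyz)] with i hlength harea
  rw [penalized]
  linarith

lemma exists_isUnitTimeCurve_forall_penalized_le (hF : Continuous F) (hF₀ : ∀ p, 0 ≤ F p)
    (κ A : ℝ) {Λ : ℝ≥0} {p q : ℝ × ℝ} (hne : ∃ γ, IsUnitTimeCurve Λ p q γ) :
    ∃ γ, IsUnitTimeCurve Λ p q γ ∧
      ∀ β, IsUnitTimeCurve Λ p q β → penalized F κ A 0 1 γ ≤ penalized F κ A 0 1 β := by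
  refine exists_isUnitTimeCurve_forall_le (fun γ β h => ?_) (fun γ hγ l hl hlim y hy => ?_) hne
  · have hIoo := h.mono Ioo_subset_Icc_self
    simp only [penalized, action_congr_of_eqOn_Ioo zero_le_one hIoo]
  · exact eventually_lt_penalized hF hF₀ hγ.lipschitzWith (hl.mono fun β hβ => hβ.lipschitzWith)
      zero_le_one hlim hy

end Penalized

/-! ### Quadratic behaviour of a `C²` potential at its wells -/

lemma exists_pos_mul_le_of_isCompact {X : Type*} [TopologicalSpace X] {K : Set X}
    (hK : IsCompact K) {f g : X → ℝ} (hg : ∀ x, 0 ≤ g x)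
    (h : ∀ x ∈ K, ∃ c > 0, ∀ᶠ y in 𝓝 x, c * g y ≤ f y) :
    ∃ c > 0, ∀ x ∈ K, c * g x ≤ f x := by
  refine hK.induction_on (p := fun s => ∃ c > 0, ∀ x ∈ s, c * g x ≤ f x)
    ⟨1, one_pos, by simp⟩ (fun s t hst ⟨c, hc, ht⟩ => ⟨c, hc, fun x hx => ht x (hst hx)⟩) ?_
    fun x hx => ?_
  · rintro s t ⟨c, hc, hs⟩ ⟨d, hd, ht⟩
    refine ⟨min c d, lt_min hc hd, fun x hx => ?_⟩
    rcases hx with hx | hx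
    · exact (mul_le_mul_of_nonneg_right (min_le_left c d) (hg x)).trans (hs x hx)
    · exact (mul_le_mul_of_nonneg_right (min_le_right c d) (hg x)).trans (ht x hx)
  · obtain ⟨c, hc, hev⟩ := h x hx
    exact ⟨_, mem_nhdsWithin_of_mem_nhds hev, c, hc, fun y hy => hy⟩

lemma exists_eventually_pos_mul_le {X : Type*} [TopologicalSpace X] {f g : X → ℝ}
    (hf : Continuous f) (hg : Continuous g) {x : X} (hx : 0 < f x) :
    ∃ c > 0, ∀ᶠ y in 𝓝 x, c * g y ≤ f y := by
  refine ⟨f x / (2 * (|g x| + 1)), by positivity, ?_⟩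
  refine ((hg.const_mul _).continuousAt.eventually_lt hf.continuousAt ?_).mono fun y => le_of_lt
  rw [div_mul_eq_mul_div, div_lt_iff₀ (by positivity)]
  nlinarith [le_abs_self (g x), abs_nonneg (g x)]

lemma exists_eventually_mul_sq_le_of_well {E : Type*} [NormedAddCommGroup E] {f : E → ℝ} {p q : E}
    (hf : ∃ c > 0, ∀ᶠ x in 𝓝 p, c * ‖x - p‖ ^ 2 ≤ f x) :
    ∃ c > 0, ∀ᶠ x in 𝓝 p, c * (‖x - p‖ * ‖x - q‖) ^ 2 ≤ f x := by
  obtain ⟨c, hc, hev⟩ := hf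
  have hnear : ∀ᶠ x in 𝓝 p, ‖x - q‖ < ‖p - q‖ + 1 :=
    (by fun_prop : Continuous fun x => ‖x - q‖).continuousAt.eventually_lt_const (lt_add_one _)
  refine ⟨c / (‖p - q‖ + 1) ^ 2, by positivity, ?_⟩
  filter_upwards [hev, hnear] with x hx hxq
  calc c / (‖p - q‖ + 1) ^ 2 * (‖x - p‖ * ‖x - q‖) ^ 2
      ≤ c / (‖p - q‖ + 1) ^ 2 * (‖x - p‖ * (‖p - q‖ + 1)) ^ 2 := by gcongr
    _ = c * ‖x - p‖ ^ 2 := by field_simp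
    _ ≤ f x := hx

section Wells

variable {E : Type*} [NormedAddCommGroup E] [NormedSpace ℝ E]

/-- A nonnegative `C²` potential with exactly two zeros, both nondegenerate, bounded away from zero
near infinity: `TwoWell` with smoothness weakened to `C²`. -/
structure IsC2TwoWell (W : E → ℝ) (pm pp : E) : Prop where
  contDiff : ContDiff ℝ 2 W
  nonneg : ∀ p, 0 ≤ W p
  wells_ne : pm ≠ pp
  eq_zero_iff : ∀ p, W p = 0 ↔ p = pm ∨ p = pp
  hess_m : ∀ v : E, v ≠ 0 → 0 < iteratedFDeriv ℝ 2 W pm ![v, v]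
  hess_p : ∀ v : E, v ≠ 0 → 0 < iteratedFDeriv ℝ 2 W pp ![v, v]
  coercive : ∃ c > 0, ∃ R : ℝ, ∀ p : E, R ≤ ‖p‖ → c ≤ W p

variable {W : E → ℝ} {p₀ : E}

lemma contDiff_one_fderiv (hW : ContDiff ℝ 2 W) : ContDiff ℝ 1 (fderiv ℝ W) :=
  hW.fderiv_right (by norm_num)

lemma isLittleO_sub_half_hessian (hW : ContDiff ℝ 2 W) (h₀ : W p₀ = 0) (hd : fderiv ℝ W p₀ = 0) :
    (fun v => W (p₀ + v) - 2⁻¹ * fderiv ℝ (fderiv ℝ W) p₀ v v) =o[𝓝 0] fun v => ‖v‖ ^ 2 := by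
  set H := fderiv ℝ (fderiv ℝ W) p₀
  have hsymm : ∀ v w, H v w = H w v := fun v w =>
    hW.contDiffAt.isSymmSndFDerivAt (by simp) v w
  have hremainder (v : E) : HasFDerivAt (fun v => W (p₀ + v) - 2⁻¹ * H v v)
      (fderiv ℝ W (p₀ + v) - H v) v := by
    have hquad : HasFDerivAt (fun v => 2⁻¹ * H v v) (H v) v := by
      refine ((H.hasFDerivAt.clm_apply (hasFDerivAt_id v)).const_mul 2⁻¹).congr_fderiv ?_
      ext w
      simp only [ContinuousLinearMap.comp_id, id_eq, smul_add, add_apply, smul_apply, smul_eq_mul,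
        ContinuousLinearMap.flip_apply, hsymm w v]
      ring
    have hshift : HasFDerivAt (fun v => W (p₀ + v)) (fderiv ℝ W (p₀ + v)) v :=
      (hasFDerivAt_comp_add_left p₀).2 (hW.differentiable two_ne_zero _).hasFDerivAt
    exact hshift.sub hquad
  have hfderiv := (((contDiff_one_fderiv hW).differentiable one_ne_zero p₀).hasFDerivAt).isLittleO
  refine Asymptotics.isLittleO_iff.2 fun ε hε => ?_
  obtain ⟨r, hr, hball⟩ := Metric.eventually_nhds_iff.1 (Asymptotics.isLittleO_iff.1 hfderiv hε)
  filter_upwards [Metric.ball_mem_nhds (0 : E) hr] with v hv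
  have hbound : ∀ w ∈ Metric.closedBall (0 : E) ‖v‖,
      ‖fderiv ℝ W (p₀ + w) - H w‖ ≤ ε * ‖v‖ := fun w hw => by
    have hwv := mem_closedBall_zero_iff.1 hw
    have := hball (y := p₀ + w)
      (by simpa using hwv.trans_lt (mem_ball_zero_iff.1 hv))
    rw [hd, sub_zero, add_sub_cancel_left] at this
    exact this.trans (by gcongr)
  have hmean := (convex_closedBall (0 : E) ‖v‖).norm_image_sub_le_of_norm_hasFDerivWithin_le
    (fun w _ => (hremainder w).hasFDerivWithinAt) hbound
    (Metric.mem_closedBall_self (norm_nonneg v)) (mem_closedBall_zero_iff.2 le_rfl)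
  simp only [add_zero, h₀, map_zero, mul_zero, sub_zero] at hmean
  rw [norm_pow, norm_norm, sq, ← mul_assoc]
  exact hmean

namespace IsC2TwoWell

variable {pm pp : E} (hW : IsC2TwoWell W pm pp)
include hW

lemma apply_m : W pm = 0 := (hW.eq_zero_iff pm).2 (Or.inl rfl)

lemma apply_p : W pp = 0 := (hW.eq_zero_iff pp).2 (Or.inr rfl)

lemma fderiv_eq_zero {p : E} (hp : W p = 0) : fderiv ℝ W p = 0 :=
  IsLocalMin.fderiv_eq_zero (Eventually.of_forall fun x => hp.trans_le (hW.nonneg x))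

end IsC2TwoWell

variable [FiniteDimensional ℝ E]

lemma exists_mul_sq_norm_le_of_pos {H : E →L[ℝ] E →L[ℝ] ℝ} (hH : ∀ v, v ≠ 0 → 0 < H v v) :
    ∃ c > 0, ∀ v, c * ‖v‖ ^ 2 ≤ H v v := by
  have := FiniteDimensional.proper ℝ E
  rcases subsingleton_or_nontrivial E with hE | hE
  · exact ⟨1, one_pos, fun v => by simp [Subsingleton.elim v 0]⟩
  have hcont : Continuous fun v : E => H v v := by fun_prop
  obtain ⟨u, hu, hmin⟩ := (isCompact_sphere (0 : E) 1).exists_isMinOn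
    (NormedSpace.sphere_nonempty.2 zero_le_one) hcont.continuousOn
  refine ⟨H u u, hH u (ne_zero_of_mem_unit_sphere ⟨u, hu⟩), fun v => ?_⟩
  rcases eq_or_ne v 0 with rfl | hv
  · simp
  have hv₀ : ‖v‖ ≠ 0 := norm_ne_zero_iff.2 hv
  have hle : H u u ≤ H (‖v‖⁻¹ • v) (‖v‖⁻¹ • v) := hmin (by simp [norm_smul, hv₀])
  simp only [map_smul, smul_apply, smul_eq_mul] at hle
  calc H u u * ‖v‖ ^ 2 ≤ ‖v‖⁻¹ * (‖v‖⁻¹ * H v v) * ‖v‖ ^ 2 := by gcongr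
    _ = H v v := by field_simp

lemma exists_mul_sq_norm_le_of_hessian_pos (hW : ContDiff ℝ 2 W) (h₀ : W p₀ = 0)
    (hd : fderiv ℝ W p₀ = 0) (hH : ∀ v : E, v ≠ 0 → 0 < iteratedFDeriv ℝ 2 W p₀ ![v, v]) :
    ∃ c > 0, ∀ᶠ p in 𝓝 p₀, c * ‖p - p₀‖ ^ 2 ≤ W p := by
  obtain ⟨c, hc, hcH⟩ := exists_mul_sq_norm_le_of_pos (H := fderiv ℝ (fderiv ℝ W) p₀)
    fun v hv => by simpa [iteratedFDeriv_two_apply] using hH v hv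
  have htaylor := Asymptotics.isLittleO_iff.1 (isLittleO_sub_half_hessian hW h₀ hd)
    (c := c / 4) (by positivity)
  refine ⟨c / 4, by positivity, ?_⟩
  have hshift : Tendsto (fun p => p - p₀) (𝓝 p₀) (𝓝 0) :=
    Continuous.tendsto' (by fun_prop) _ _ (sub_self _)
  filter_upwards [hshift.eventually htaylor] with p hp
  rw [add_sub_cancel, norm_pow, norm_norm, Real.norm_eq_abs] at hp
  linarith [(abs_le.1 hp).1, hcH (p - p₀)]

-- By the triangle inequality one of the two distances is at least `‖q - p‖ / 2`.
lemma exists_norm_le_mul_dist_wells {G : Type*} [NormedAddCommGroup G] {Ω : E → G}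
    (hΩ : LocallyLipschitz Ω) {p q : E} (hpq : p ≠ q) (hp : Ω p = 0) (hq : Ω q = 0) {R : ℝ}
    (hpR : ‖p‖ ≤ R) (hqR : ‖q‖ ≤ R) :
    ∃ C > 0, ∀ x, ‖x‖ ≤ R → ‖Ω x‖ ≤ C * (‖x - p‖ * ‖x - q‖) := by
  have := FiniteDimensional.proper ℝ E
  have hd : 0 < ‖q - p‖ := norm_sub_pos_iff.2 hpq.symm
  obtain ⟨K, hK⟩ := hΩ.locallyLipschitzOn.exists_lipschitzOnWith_of_compact
    (isCompact_closedBall (0 : E) R)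
  have hle {x y : E} (hx : ‖x‖ ≤ R) (hy : ‖y‖ ≤ R) (hΩy : Ω y = 0) : ‖Ω x‖ ≤ K * ‖x - y‖ := by
    simpa only [dist_eq_norm, hΩy, sub_zero] using hK.dist_le_mul x
      (mem_closedBall_zero_iff.2 hx) y (mem_closedBall_zero_iff.2 hy)
  refine ⟨2 * K / ‖q - p‖ + 1, by positivity, fun x hx => ?_⟩
  have htriangle : ‖q - p‖ ≤ ‖x - p‖ + ‖x - q‖ := by
    simpa only [sub_sub_sub_cancel_left] using norm_sub_le (x - p) (x - q)
  have hmul : ‖Ω x‖ * ‖q - p‖ ≤ 2 * K * (‖x - p‖ * ‖x - q‖) := by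
    calc ‖Ω x‖ * ‖q - p‖ ≤ ‖Ω x‖ * ‖x - q‖ + ‖Ω x‖ * ‖x - p‖ := by
          nlinarith [norm_nonneg (Ω x)]
      _ ≤ K * ‖x - p‖ * ‖x - q‖ + K * ‖x - q‖ * ‖x - p‖ := by
          gcongr
          exacts [hle hx hpR hp, hle hx hqR hq]
      _ = 2 * K * (‖x - p‖ * ‖x - q‖) := by ring
  calc ‖Ω x‖ ≤ 2 * K * (‖x - p‖ * ‖x - q‖) / ‖q - p‖ := (le_div_iff₀ hd).2 hmul
    _ = 2 * K / ‖q - p‖ * (‖x - p‖ * ‖x - q‖) := by ring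
    _ ≤ (2 * K / ‖q - p‖ + 1) * (‖x - p‖ * ‖x - q‖) := by gcongr; linarith

lemma exists_abs_sub_fderiv_le_mul_sq (hW : ContDiff ℝ 2 W) (R : ℝ) :
    ∃ C > 0, ∀ p v, ‖p‖ ≤ R → ‖p + v‖ ≤ R →
      |W (p + v) - W p - fderiv ℝ W p v| ≤ C * ‖v‖ ^ 2 := by
  have := FiniteDimensional.proper ℝ E
  obtain ⟨K, hK⟩ := (contDiff_one_fderiv hW).locallyLipschitz.locallyLipschitzOn
    |>.exists_lipschitzOnWith_of_compact (isCompact_closedBall (0 : E) R)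
  refine ⟨K + 1, by positivity, fun p v hp hpv => ?_⟩
  rw [← mem_closedBall_zero_iff] at hp hpv
  have hseg := (convex_closedBall (0 : E) R).segment_subset hp hpv
  have hderiv : ∀ x ∈ segment ℝ p (p + v), ‖fderiv ℝ W x - fderiv ℝ W p‖ ≤ K * ‖v‖ := by
    intro x hx
    refine (hK.norm_sub_le (hseg hx) hp).trans (mul_le_mul_of_nonneg_left ?_ K.2)
    simpa using norm_sub_le_of_mem_segment hx
  have hmean := (convex_segment p (p + v)).norm_image_sub_le_of_norm_fderiv_le'
    (fun x _ => hW.differentiable two_ne_zero x) hderiv (left_mem_segment ℝ _ _)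
    (right_mem_segment ℝ _ _)
  rw [add_sub_cancel_left, Real.norm_eq_abs] at hmean
  nlinarith [sq_nonneg ‖v‖]

namespace IsC2TwoWell

variable {pm pp : E} (hW : IsC2TwoWell W pm pp)
include hW

lemma exists_norm_fderiv_le {R : ℝ} (hm : ‖pm‖ ≤ R) (hp : ‖pp‖ ≤ R) :
    ∃ C > 0, ∀ p, ‖p‖ ≤ R → ‖fderiv ℝ W p‖ ≤ C * (‖p - pm‖ * ‖p - pp‖) :=
  exists_norm_le_mul_dist_wells (contDiff_one_fderiv hW.contDiff).locallyLipschitz hW.wells_ne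
    (hW.fderiv_eq_zero hW.apply_m) (hW.fderiv_eq_zero hW.apply_p) hm hp

lemma exists_mul_sq_le (R : ℝ) :
    ∃ c > 0, ∀ p, ‖p‖ ≤ R → c * (‖p - pm‖ * ‖p - pp‖) ^ 2 ≤ W p := by
  have := FiniteDimensional.proper ℝ E
  have hlocal (p : E) : ∃ c > 0, ∀ᶠ x in 𝓝 p, c * (‖x - pm‖ * ‖x - pp‖) ^ 2 ≤ W x := by
    rcases (hW.nonneg p).eq_or_lt with h₀ | hpos
    · rcases (hW.eq_zero_iff p).1 h₀.symm with rfl | rfl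
      · exact exists_eventually_mul_sq_le_of_well (exists_mul_sq_norm_le_of_hessian_pos hW.contDiff
          hW.apply_m (hW.fderiv_eq_zero hW.apply_m) hW.hess_m)
      · simpa only [mul_comm ‖_ - pm‖] using exists_eventually_mul_sq_le_of_well (q := pm)
          (exists_mul_sq_norm_le_of_hessian_pos hW.contDiff hW.apply_p
            (hW.fderiv_eq_zero hW.apply_p) hW.hess_p)
    · exact exists_eventually_pos_mul_le hW.contDiff.continuous (by fun_prop) hpos
  obtain ⟨c, hc, hle⟩ := exists_pos_mul_le_of_isCompact (isCompact_closedBall (0 : E) R)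
    (fun p => sq_nonneg _) fun p _ => hlocal p
  exact ⟨c, hc, fun p hp => hle p (mem_closedBall_zero_iff.2 hp)⟩

lemma exists_le_mul_sq {p₀ : E} (h₀ : W p₀ = 0) {R : ℝ} (hR : ‖p₀‖ ≤ R) :
    ∃ C > 0, ∀ p, ‖p‖ ≤ R → W p ≤ C * ‖p - p₀‖ ^ 2 := by
  obtain ⟨C, hC, htaylor⟩ := exists_abs_sub_fderiv_le_mul_sq hW.contDiff R
  refine ⟨C, hC, fun p hp => ?_⟩
  have hle := htaylor p₀ (p - p₀) hR (by rwa [add_sub_cancel])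
  rw [add_sub_cancel, h₀, hW.fderiv_eq_zero h₀, zero_apply, sub_zero, sub_zero] at hle
  exact (le_abs_self _).trans hle

end IsC2TwoWell

end Wells

/-! ### Length and area estimates near the wells -/

section DegenerateLength

variable {F : ℝ × ℝ → ℝ} {γ : ℝ → ℝ × ℝ} {a b : ℝ}

lemma mul_norm_sub_le_action (hF : Continuous F) (hγ : LocallyLipschitz γ) (hab : a ≤ b) {k : ℝ}
    (hk : 0 ≤ k) (hkF : ∀ t ∈ Icc a b, k ≤ F (γ t)) :
    k * ‖γ b - γ a‖ ≤ action (lengthDensity F) a b γ := by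
  calc k * ‖γ b - γ a‖ ≤ k * normLength a b γ := by gcongr; exact norm_sub_le_normLength hγ hab
    _ = action (fun _ v => k * ‖v‖) a b γ := (intervalIntegral.integral_const_mul _ _).symm
    _ ≤ action (lengthDensity F) a b γ :=
        action_mono (continuous_const.mul continuous_uncurry_norm_snd)
          (continuous_lengthDensity hF) hγ hab fun t ht =>
            mul_le_mul (hkF t ht) (norm_le_enorm2 _) (norm_nonneg _) (hk.trans (hkF t ht))

lemma action_lengthDensity_pos (hF : Continuous F) (hF₀ : ∀ p, 0 ≤ F p) (hγ : LocallyLipschitz γ)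
    (hab : a < b) (hpos : ∀ t ∈ Ioo a b, 0 < F (γ t)) (hne : γ a ≠ γ b) :
    0 < action (lengthDensity F) a b γ := by
  by_contra! hzero
  have hconst : ∀ s ∈ Ioo a b, ∀ t ∈ Ioo a b, s ≤ t → γ s = γ t := by
    intro s hs t ht hst
    obtain ⟨r, hr, hmin⟩ := isCompact_Icc.exists_isMinOn (nonempty_Icc.2 hst)
      (hF.comp hγ.continuous).continuousOn
    have hk : 0 < F (γ r) := hpos r ⟨hs.1.trans_le hr.1, hr.2.trans_lt ht.2⟩
    have hle := (mul_norm_sub_le_action hF hγ hst hk.le hmin).trans <|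
      action_mono_interval (continuous_lengthDensity hF) (lengthDensity_nonneg hF₀) hγ hs.1.le
        ht.2.le
    have hnorm : ‖γ t - γ s‖ ≤ 0 := nonpos_of_mul_nonpos_right (hle.trans hzero) hk
    exact (sub_eq_zero.1 (norm_le_zero_iff.1 hnorm)).symm
  obtain ⟨m, hm⟩ := nonempty_Ioo.2 hab
  have hclosed : Icc a b ⊆ {t | γ t = γ m} := by
    rw [← closure_Ioo hab.ne]
    refine closure_minimal (fun t ht => ?_) (isClosed_eq hγ.continuous continuous_const)
    exact (le_total t m).elim (hconst t ht m hm) fun h => (hconst m hm t ht h).symm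
  exact hne ((hclosed (left_mem_Icc.2 hab.le)).trans (hclosed (right_mem_Icc.2 hab.le)).symm)

lemma exists_last_eq {u : ℝ → ℝ} (hu : Continuous u) (hab : a ≤ b) {y : ℝ} (ha : u a ≤ y)
    (hb : y ≤ u b) : ∃ s ∈ Icc a b, u s = y ∧ ∀ r ∈ Icc s b, y ≤ u r := by
  have hcompact : IsCompact (Icc a b ∩ u ⁻¹' {y}) :=
    isCompact_Icc.inter_right (isClosed_singleton.preimage hu)
  obtain ⟨s, ⟨hs, hsy⟩, hlast⟩ := hcompact.exists_isGreatest
    (intermediate_value_Icc hab hu.continuousOn ⟨ha, hb⟩)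
  refine ⟨s, hs, hsy, fun r hr => ?_⟩
  by_contra! hlt
  obtain ⟨r', hr', hr'y⟩ := intermediate_value_Icc hr.2 hu.continuousOn ⟨hlt.le, hb⟩
  have hr's : r' ≤ s := hlast ⟨⟨hs.1.trans (hr.1.trans hr'.1), hr'.2⟩, hr'y⟩
  rw [le_antisymm (hr'.1.trans hr's) hr.1] at hlt
  exact hlt.ne hsy

lemma norm_le_of_action_le (hF : Continuous F) (hF₀ : ∀ p, 0 ≤ F p) {k R E₁ : ℝ} (hk : 0 < k)
    (hkF : ∀ p, R ≤ ‖p‖ → k ≤ F p) (hγ : LocallyLipschitz γ) (ha : ‖γ a‖ ≤ R)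
    (hE : action (lengthDensity F) a b γ ≤ E₁) {t : ℝ} (ht : t ∈ Icc a b) :
    ‖γ t‖ ≤ R + E₁ / k := by
  have hE₁ : 0 ≤ E₁ := (action_nonneg (lengthDensity_nonneg hF₀) (ht.1.trans ht.2)).trans hE
  rcases le_total ‖γ t‖ R with hR | hR
  · exact hR.trans (le_add_of_nonneg_right (by positivity))
  obtain ⟨s, hs, hsR, hout⟩ := exists_last_eq hγ.continuous.norm ht.1 ha hR
  have hmul : k * ‖γ t - γ s‖ ≤ E₁ :=
    (mul_norm_sub_le_action hF hγ hs.2 hk.le fun r hr => hkF _ (hout r hr)).trans <|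
      (action_mono_interval (continuous_lengthDensity hF) (lengthDensity_nonneg hF₀) hγ hs.1
        ht.2).trans hE
  have hdist : ‖γ t - γ s‖ ≤ E₁ / k := (le_div_iff₀' hk).2 hmul
  linarith [norm_sub_norm_le (γ t) (γ s)]

end DegenerateLength

section LengthBound

variable {a b : ℝ} {u : ℝ → ℝ}

lemma monotoneOn_sqrt_sub_sqrt {s : Set ℝ} (hu : MonotoneOn u s) (E : ℝ) :
    MonotoneOn (fun t => √(u t) - √(E - u t)) s := fun _ hx _ hy hxy =>
  sub_le_sub (Real.sqrt_le_sqrt (hu hx hy hxy))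
    (Real.sqrt_le_sqrt (sub_le_sub_left (hu hx hy hxy) E))

lemma hasDerivAt_sqrt_sub_sqrt {E u' t : ℝ} (hu : HasDerivAt u u' t) (hpos : 0 < u t)
    (hlt : u t < E) :
    HasDerivAt (fun t => √(u t) - √(E - u t))
      (u' * (√(u t) + √(E - u t)) / (2 * (√(u t) * √(E - u t)))) t := by
  have hy : 0 < √(E - u t) := Real.sqrt_pos.2 (sub_pos.2 hlt)
  refine ((hu.sqrt hpos.ne').sub ((hu.const_sub E).sqrt (sub_pos.2 hlt).ne')).congr_deriv ?_
  field_simp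
  ring

lemma le_mul_of_mul_sqrt_le {ℓ f K x y : ℝ} (hx : 0 < x) (hy : 0 < y) (hf : 0 ≤ f) (hK : 0 ≤ K)
    (hle : ℓ * (√x * √y) ≤ K * f) :
    ℓ ≤ 2 * K / √(x + y) * (f * (√x + √y) / (2 * (√x * √y))) := by
  have hsx := Real.sqrt_pos.2 hx
  have hsy := Real.sqrt_pos.2 hy
  calc ℓ ≤ K * f / (√x * √y) := (le_div_iff₀ (by positivity)).2 hle
    _ = K * f / (√x * √y) / √(x + y) * √(x + y) := by field_simp
    _ ≤ K * f / (√x * √y) / √(x + y) * (√x + √y) := by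
        gcongr
        exact Real.sqrt_le_iff.2 ⟨by positivity, by
          nlinarith [Real.sq_sqrt hx.le, Real.sq_sqrt hy.le, mul_pos hsx hsy]⟩
    _ = 2 * K / √(x + y) * (f * (√x + √y) / (2 * (√x * √y))) := by field_simp

-- The hypotheses bound `ℓ` by `2 * K / √(u b)` times the derivative of the monotone function
-- `√u - √(u b - u)`, whose total increment is `2 * √(u b)`.
lemma integral_le_four_mul_of_mul_sqrt_le {f ℓ : ℝ → ℝ} {K : ℝ} (hab : a ≤ b)
    (hu : MonotoneOn u (Icc a b)) (ha : u a = 0) (hb : 0 < u b)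
    (hpos : ∀ t ∈ Ioo a b, u t ∈ Ioo 0 (u b)) (hf : ∀ t, 0 ≤ f t)
    (hderiv : ∀ᵐ t, t ∈ Ioo a b → HasDerivAt u (f t) t) (hℓ : IntervalIntegrable ℓ volume a b)
    (hK : 0 ≤ K) (hle : ∀ t ∈ Ioo a b, ℓ t * (√(u t) * √(u b - u t)) ≤ K * f t) :
    ∫ t in a..b, ℓ t ≤ 4 * K := by
  set g : ℝ → ℝ := fun t => √(u t) - √(u b - u t) with hg
  have hgmono : MonotoneOn g (uIcc a b) := by
    rw [uIcc_of_le hab]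
    exact monotoneOn_sqrt_sub_sqrt hu _
  have hincrement : ∫ t in a..b, deriv g t ≤ 2 * √(u b) := by
    have hmem := hgmono.intervalIntegral_deriv_mem_uIcc
    have hdiff : g b - g a = 2 * √(u b) := by simp [hg, ha, two_mul]
    rw [hdiff, uIcc_of_le (by positivity)] at hmem
    exact hmem.2
  have hbound : ∀ᵐ t, t ∈ Ioo a b → ℓ t ≤ 2 * K / √(u b) * deriv g t := by
    filter_upwards [hderiv] with t hut ht
    obtain ⟨hpos, hlt⟩ := hpos t ht
    rw [(hasDerivAt_sqrt_sub_sqrt (hut ht) hpos hlt).deriv]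
    simpa only [add_sub_cancel] using
      le_mul_of_mul_sqrt_le hpos (sub_pos.2 hlt) (hf t) hK (hle t ht)
  calc ∫ t in a..b, ℓ t ≤ ∫ t in a..b, 2 * K / √(u b) * deriv g t := by
        refine intervalIntegral.integral_mono_ae_restrict hab hℓ
          (hgmono.intervalIntegrable_deriv.const_mul _) ?_
        rwa [EventuallyLE, ← restrict_Ioo_eq_restrict_Icc, ae_restrict_iff' measurableSet_Ioo]
    _ = 2 * K / √(u b) * ∫ t in a..b, deriv g t := intervalIntegral.integral_const_mul _ _
    _ ≤ 2 * K / √(u b) * (2 * √(u b)) := by gcongr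
    _ = 4 * K := by
        have := Real.sqrt_pos.2 hb
        field_simp
        ring

end LengthBound

section AxialCoord

/-- The affine coordinate on `ℝ²` along the line through `p` and `q`, constant on its normals,
which is `0` at `p` and `1` at `q`. -/
def axialCoord (p q x : ℝ × ℝ) : ℝ :=
  ((q.1 - p.1) ^ 2 + (q.2 - p.2) ^ 2)⁻¹ * dotForm (q - p) (x - p)

/-- The differential of `axialCoord p q`. -/
def axialForm (p q : ℝ × ℝ) : ℝ × ℝ →L[ℝ] ℝ :=
  ((q.1 - p.1) ^ 2 + (q.2 - p.2) ^ 2)⁻¹ • dotForm (q - p)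

variable {p q : ℝ × ℝ}

lemma sq_add_sq_sub_pos (hpq : p ≠ q) : 0 < (q.1 - p.1) ^ 2 + (q.2 - p.2) ^ 2 := by
  refine lt_of_le_of_ne (by positivity) fun h => hpq ?_
  ext <;> nlinarith [sq_nonneg (q.1 - p.1), sq_nonneg (q.2 - p.2)]

lemma axialCoord_left : axialCoord p q p = 0 := by
  rw [axialCoord, sub_self, map_zero, mul_zero]

lemma axialCoord_right (hpq : p ≠ q) : axialCoord p q q = 1 := by
  rw [axialCoord, dotForm_apply, inv_mul_eq_one₀ (sq_add_sq_sub_pos hpq).ne']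
  simp only [Prod.fst_sub, Prod.snd_sub, sq]

lemma hasFDerivAt_axialCoord (x : ℝ × ℝ) : HasFDerivAt (axialCoord p q) (axialForm p q) x :=
  ((dotForm (q - p)).hasFDerivAt.comp x ((hasFDerivAt_id x).sub_const p)).const_mul _

lemma contDiff_axialCoord {n : WithTop ℕ∞} : ContDiff ℝ n (axialCoord p q) := by
  unfold axialCoord
  fun_prop

end AxialCoord

section WellBounds

/-- On the ball of radius `R`, which contains the two wells, `F` is comparable to the distance to
the set of wells. -/
structure LinearWellBounds (F : ℝ × ℝ → ℝ) (pm pp : ℝ × ℝ) (R C c : ℝ) : Prop where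
  continuous : Continuous F
  nonneg : ∀ p, 0 ≤ F p
  wells_ne : pm ≠ pp
  norm_m_le : ‖pm‖ ≤ R
  norm_p_le : ‖pp‖ ≤ R
  C_pos : 0 < C
  c_pos : 0 < c
  le_m : ∀ p, ‖p‖ ≤ R → F p ≤ C * ‖p - pm‖
  le_p : ∀ p, ‖p‖ ≤ R → F p ≤ C * ‖p - pp‖
  mul_le : ∀ p, ‖p‖ ≤ R → c * (‖p - pm‖ * ‖p - pp‖) ≤ F p

variable {F : ℝ × ℝ → ℝ} {pm pp : ℝ × ℝ} {R C c : ℝ}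

lemma IsC2TwoWell.exists_linearWellBounds {W : ℝ × ℝ → ℝ} (hW : IsC2TwoWell W pm pp)
    (hm : ‖pm‖ ≤ R) (hp : ‖pp‖ ≤ R) :
    ∃ C c, LinearWellBounds (fun p => √(W p)) pm pp R C c := by
  obtain ⟨C₁, hC₁, hle₁⟩ := hW.exists_le_mul_sq hW.apply_m hm
  obtain ⟨C₂, -, hle₂⟩ := hW.exists_le_mul_sq hW.apply_p hp
  obtain ⟨c, hc, hge⟩ := hW.exists_mul_sq_le R
  have hsqrt {k x : ℝ} (hk : 0 < k) (hx : 0 ≤ x) : √(k * x ^ 2) = √k * x := by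
    rw [Real.sqrt_mul hk.le, Real.sqrt_sq hx]
  refine ⟨√(max C₁ C₂), √c, hW.contDiff.continuous.sqrt, fun _ => Real.sqrt_nonneg _, hW.wells_ne,
    hm, hp, Real.sqrt_pos.2 (lt_max_of_lt_left hC₁), Real.sqrt_pos.2 hc, fun p hpR => ?_,
    fun p hpR => ?_, fun p hpR => ?_⟩
  · rw [← hsqrt (lt_max_of_lt_left hC₁) (norm_nonneg _)]
    exact Real.sqrt_le_sqrt ((hle₁ p hpR).trans (by gcongr; exact le_max_left _ _))
  · rw [← hsqrt (lt_max_of_lt_left hC₁) (norm_nonneg _)]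
    exact Real.sqrt_le_sqrt ((hle₂ p hpR).trans (by gcongr; exact le_max_right _ _))
  · rw [← hsqrt hc (by positivity)]
    exact Real.sqrt_le_sqrt (hge p hpR)

namespace LinearWellBounds

variable (hB : LinearWellBounds F pm pp R C c)
include hB

lemma pos {p : ℝ × ℝ} (hp : ‖p‖ ≤ R) (hm : p ≠ pm) (hp' : p ≠ pp) : 0 < F p := by
  have := hB.c_pos
  have := norm_sub_pos_iff.2 hm
  have := norm_sub_pos_iff.2 hp'
  exact lt_of_lt_of_le (by positivity) (hB.mul_le p hp)

lemma exists_abs_apply_le {Ω : ℝ × ℝ → ℝ × ℝ →L[ℝ] ℝ} (hΩ : LocallyLipschitz Ω) (hm : Ω pm = 0)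
    (hp : Ω pp = 0) :
    ∃ C₀ > 0, ∀ p v, ‖p‖ ≤ R → |Ω p v| ≤ C₀ * lengthDensity F p v := by
  have hc := hB.c_pos
  obtain ⟨K, hK, hle⟩ :=
    exists_norm_le_mul_dist_wells hΩ hB.wells_ne hm hp hB.norm_m_le hB.norm_p_le
  refine ⟨K / c, by positivity, fun p v hpR => ?_⟩
  have hΩp : ‖Ω p‖ ≤ K / c * F p := calc
    ‖Ω p‖ ≤ K * (‖p - pm‖ * ‖p - pp‖) := hle p hpR
    _ = K / c * (c * (‖p - pm‖ * ‖p - pp‖)) := by field_simp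
    _ ≤ K / c * F p := by gcongr; exact hB.mul_le p hpR
  calc |Ω p v| ≤ ‖Ω p‖ * ‖v‖ := (Ω p).le_opNorm v
    _ ≤ K / c * F p * enorm2 v :=
        mul_le_mul hΩp (norm_le_enorm2 v) (norm_nonneg v) ((norm_nonneg _).trans hΩp)
    _ = K / c * lengthDensity F p v := mul_assoc _ _ _

end LinearWellBounds

/-- `h` is a potential such that, inside the ball of radius `R`, the degenerate length dominates the
integral of the area form `x dy` corrected by `dh`. -/
def IsAreaPotential (F : ℝ × ℝ → ℝ) (R C₀ : ℝ) (h : ℝ × ℝ → ℝ) : Prop :=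
  ∀ a b, a ≤ b → ∀ γ, LocallyLipschitz γ → (∀ t ∈ Icc a b, ‖γ t‖ ≤ R) →
    |action areaDensity a b γ + (h (γ b) - h (γ a))| ≤ C₀ * action (lengthDensity F) a b γ

/-- A function whose differential at each of `pm` and `pp` is opposite to the area form `x dy`. -/
def areaPotential (pm pp p : ℝ × ℝ) : ℝ :=
  -pm.1 * p.2 - (pp.1 - pm.1) * (axialCoord pm pp p ^ 2 * (p.2 - pp.2))

lemma contDiff_areaPotential {n : WithTop ℕ∞} : ContDiff ℝ n (areaPotential pm pp) := by
  have : ContDiff ℝ n (axialCoord pm pp) := contDiff_axialCoord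
  unfold areaPotential
  fun_prop

lemma hasFDerivAt_areaPotential (p : ℝ × ℝ) :
    HasFDerivAt (areaPotential pm pp) (-pm.1 • ContinuousLinearMap.snd ℝ ℝ ℝ - (pp.1 - pm.1) •
      (axialCoord pm pp p ^ 2 • ContinuousLinearMap.snd ℝ ℝ ℝ +
        (p.2 - pp.2) • (2 * axialCoord pm pp p) • axialForm pm pp)) p := by
  have hsnd : HasFDerivAt (fun p : ℝ × ℝ => p.2) (ContinuousLinearMap.snd ℝ ℝ ℝ) p :=
    hasFDerivAt_snd
  have hprod := ((hasFDerivAt_axialCoord (p := pm) (q := pp) p).pow 2).mul (hsnd.sub_const pp.2)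
  refine ((hsnd.const_mul (-pm.1)).sub (hprod.const_mul (pp.1 - pm.1))).congr_fderiv ?_
  ext <;> simp

/-- The one-form `x dy + dh` for `h = areaPotential pm pp`. -/
def correctedAreaForm (pm pp p : ℝ × ℝ) : ℝ × ℝ →L[ℝ] ℝ :=
  p.1 • ContinuousLinearMap.snd ℝ ℝ ℝ + fderiv ℝ (areaPotential pm pp) p

lemma contDiff_correctedAreaForm : ContDiff ℝ 1 (correctedAreaForm pm pp) :=
  (by fun_prop : ContDiff ℝ 1 fun p : ℝ × ℝ => p.1 • ContinuousLinearMap.snd ℝ ℝ ℝ).add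
    (contDiff_one_fderiv contDiff_areaPotential)

lemma correctedAreaForm_left : correctedAreaForm pm pp pm = 0 := by
  rw [correctedAreaForm, (hasFDerivAt_areaPotential pm).fderiv, axialCoord_left]
  ext <;> simp

lemma correctedAreaForm_right (hne : pm ≠ pp) : correctedAreaForm pm pp pp = 0 := by
  rw [correctedAreaForm, (hasFDerivAt_areaPotential pp).fderiv, axialCoord_right hne]
  ext
  · simp
  · simp
    ring

lemma action_correctedAreaForm {γ : ℝ → ℝ × ℝ} (hγ : LocallyLipschitz γ) (a b : ℝ) :
    action (fun p v => correctedAreaForm pm pp p v) a b γ =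
      action areaDensity a b γ + (areaPotential pm pp (γ b) - areaPotential pm pp (γ a)) := by
  have hcont : Continuous (Function.uncurry fun p v => fderiv ℝ (areaPotential pm pp) p v) :=
    (contDiff_areaPotential.continuous_fderiv one_ne_zero).comp continuous_fst
      |>.clm_apply continuous_snd
  rw [← action_fderiv contDiff_areaPotential hγ]
  exact intervalIntegral.integral_add (intervalIntegrable_action continuous_areaDensity hγ a b)
    (intervalIntegrable_action hcont hγ a b)

lemma LinearWellBounds.exists_isAreaPotential (hB : LinearWellBounds F pm pp R C c) :
    ∃ C₀ > 0, IsAreaPotential F R C₀ (areaPotential pm pp) := by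
  obtain ⟨C₀, hC₀, hle⟩ := hB.exists_abs_apply_le contDiff_correctedAreaForm.locallyLipschitz
    correctedAreaForm_left (correctedAreaForm_right hB.wells_ne)
  refine ⟨C₀, hC₀, fun a b hab γ hγ hR => ?_⟩
  have hcont : Continuous (Function.uncurry fun p v => correctedAreaForm pm pp p v) :=
    (contDiff_correctedAreaForm.continuous.comp continuous_fst).clm_apply continuous_snd
  rw [← action_correctedAreaForm hγ]
  exact abs_action_le_mul hcont (continuous_lengthDensity hB.continuous) hγ hab C₀
    fun t ht => hle _ _ (hR t ht)

end WellBounds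

section LengthNearWells

lemma sqrt_mul_sqrt_le_of_le_mul_sq {x y D m p : ℝ} (hD : 0 ≤ D) (hm : 0 ≤ m) (hp : 0 ≤ p)
    (hx : x ≤ D * m ^ 2) (hy : y ≤ D * p ^ 2) : √x * √y ≤ D * (m * p) := by
  calc √x * √y ≤ √(D * m ^ 2) * √(D * p ^ 2) := by gcongr
    _ = √D * √D * (m * p) := by
        rw [Real.sqrt_mul hD, Real.sqrt_mul hD, Real.sqrt_sq hm, Real.sqrt_sq hp]
        ring
    _ = D * (m * p) := by rw [Real.mul_self_sqrt hD]

variable {F : ℝ × ℝ → ℝ} {pm pp : ℝ × ℝ} {R C c : ℝ} (hB : LinearWellBounds F pm pp R C c)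
include hB

lemma LinearWellBounds.norm_mul_le_lengthDensity {p : ℝ × ℝ} (hp : ‖p‖ ≤ R) (v : ℝ × ℝ) {D z : ℝ}
    (hD : 0 ≤ D) (hz : z ≤ D * (‖p - pm‖ * ‖p - pp‖)) :
    ‖v‖ * z ≤ D / c * lengthDensity F p v := by
  have hc := hB.c_pos
  calc ‖v‖ * z ≤ ‖v‖ * (D * (‖p - pm‖ * ‖p - pp‖)) := by gcongr
    _ = D / c * (c * (‖p - pm‖ * ‖p - pp‖) * ‖v‖) := by field_simp
    _ ≤ D / c * (F p * enorm2 v) := by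
        gcongr
        exacts [hB.nonneg p, hB.mul_le p hp, norm_le_enorm2 v]

lemma LinearWellBounds.normLength_le {γ : ℝ → ℝ × ℝ} {a b : ℝ} (hγ : LocallyLipschitz γ)
    (hab : a < b) (ha : γ a = pm) (hb : γ b = pp) (hR : ∀ t ∈ Icc a b, ‖γ t‖ ≤ R)
    (hw : ∀ t ∈ Ioo a b, γ t ≠ pm ∧ γ t ≠ pp) {D : ℝ} (hD : 0 ≤ D)
    (hm : ∀ t ∈ Icc a b, action (lengthDensity F) a t γ ≤ D * ‖γ t - pm‖ ^ 2)
    (hp : ∀ t ∈ Icc a b, action (lengthDensity F) t b γ ≤ D * ‖γ t - pp‖ ^ 2) :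
    normLength a b γ ≤ 4 * (D / c) := by
  have hcont := continuous_lengthDensity hB.continuous
  have hnonneg := lengthDensity_nonneg hB.nonneg
  have hpos {s t : ℝ} (hs : a ≤ s) (hst : s < t) (ht : t ≤ b) (hne : γ s ≠ γ t) :
      0 < action (lengthDensity F) s t γ :=
    action_lengthDensity_pos hB.continuous hB.nonneg hγ hst (fun r hr =>
      hB.pos (hR r ⟨hs.trans hr.1.le, hr.2.le.trans ht⟩)
        (hw r ⟨hs.trans_lt hr.1, hr.2.trans_le ht⟩).1
        (hw r ⟨hs.trans_lt hr.1, hr.2.trans_le ht⟩).2) hne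
  have hrest (t : ℝ) : action (lengthDensity F) a b γ - action (lengthDensity F) a t γ =
      action (lengthDensity F) t b γ :=
    sub_eq_of_eq_add' (action_add_adjacent hcont hγ a t b).symm
  refine integral_le_four_mul_of_mul_sqrt_le (u := fun t => action (lengthDensity F) a t γ)
    (f := fun t => lengthDensity F (γ t) (deriv γ t)) hab.le
    (fun _ _ _ _ hst => action_mono_interval hcont hnonneg hγ le_rfl hst)
    intervalIntegral.integral_same (hpos le_rfl hab le_rfl (by rw [ha, hb]; exact hB.wells_ne))
    (fun t ht => ⟨hpos le_rfl ht.1 ht.2.le (ha ▸ (hw t ht).1.symm), sub_pos.1 ?_⟩)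
    (fun t => hnonneg _ _) ?_ (intervalIntegrable_action continuous_uncurry_norm_snd hγ a b)
    (div_nonneg hD hB.c_pos.le) (fun t ht => ?_)
  · rw [hrest]
    exact hpos ht.1.le ht.2 le_rfl (hb ▸ (hw t ht).2)
  · filter_upwards [(intervalIntegrable_action hcont hγ a b).ae_hasDerivAt_integral] with t h ht
    exact h (by rw [uIcc_of_le hab.le]; exact Ioo_subset_Icc_self ht) a left_mem_uIcc
  · have ht' := Ioo_subset_Icc_self ht
    exact hB.norm_mul_le_lengthDensity (hR t ht') _ hD <| sqrt_mul_sqrt_le_of_le_mul_sq hD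
      (norm_nonneg _) (norm_nonneg _) (hm t ht') ((hrest t).trans_le (hp t ht'))

end LengthNearWells

lemma exists_Ioo_forall_ne {X : Type*} [TopologicalSpace X] [T1Space X] {γ : ℝ → X} {a b : ℝ}
    (hγ : Continuous γ) (hab : a ≤ b) (hne : γ a ≠ γ b) :
    ∃ α β, a ≤ α ∧ α < β ∧ β ≤ b ∧ γ α = γ a ∧ γ β = γ b ∧
      ∀ t ∈ Ioo α β, γ t ≠ γ a ∧ γ t ≠ γ b := by
  have hcompact (s t : ℝ) (p : X) : IsCompact (Icc s t ∩ γ ⁻¹' {p}) :=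
    isCompact_Icc.inter_right (isClosed_singleton.preimage hγ)
  obtain ⟨β, ⟨hβ, hβb⟩, hfirst⟩ :=
    (hcompact a b (γ b)).exists_isLeast ⟨b, right_mem_Icc.2 hab, rfl⟩
  obtain ⟨α, ⟨hα, hαa⟩, hlast⟩ :=
    (hcompact a β (γ a)).exists_isGreatest ⟨a, left_mem_Icc.2 hβ.1, rfl⟩
  have hαβ : α ≠ β := fun h => hne (hαa.symm.trans (h ▸ hβb))
  refine ⟨α, β, hα.1, hα.2.lt_of_ne hαβ, hβ.2, hαa, hβb, fun t ht => ⟨fun h => ?_, fun h => ?_⟩⟩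
  · exact ht.1.not_ge (hlast ⟨⟨hα.1.trans ht.1.le, ht.2.le⟩, h⟩)
  · exact ht.2.not_ge (hfirst ⟨⟨hα.1.trans ht.1.le, ht.2.le.trans hβ.2⟩, h⟩)

section Chord

variable {E : Type*} [NormedAddCommGroup E] {K : ℝ≥0} {f g : ℝ → E} {s t : ℝ}

lemma lipschitzWith_ite_le (hf : LipschitzWith K f) (hg : LipschitzWith K g) (hs : f s = g s) :
    LipschitzWith K fun r => if r ≤ s then f r else g r := by
  refine lipschitzWith_of_norm_sub_le fun x y hxy => ?_
  have hf' : ∀ x y, x ≤ y → ‖f y - f x‖ ≤ K * (y - x) := fun x y hxy => by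
    simpa [abs_of_nonneg (sub_nonneg.2 hxy)] using hf.norm_sub_le y x
  have hg' : ∀ x y, x ≤ y → ‖g y - g x‖ ≤ K * (y - x) := fun x y hxy => by
    simpa [abs_of_nonneg (sub_nonneg.2 hxy)] using hg.norm_sub_le y x
  rcases le_or_gt y s with hy | hy
  · simpa only [if_pos hy, if_pos (hxy.trans hy)] using hf' x y hxy
  rcases le_or_gt x s with hx | hx
  · simp only [if_neg hy.not_ge, if_pos hx]
    calc ‖g y - f x‖ ≤ ‖g y - g s‖ + ‖f s - f x‖ := hs ▸ norm_sub_le_norm_sub_add_norm_sub ..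
      _ ≤ K * (y - s) + K * (s - x) := add_le_add (hg' s y hy.le) (hf' x s hx)
      _ = K * (y - x) := by ring
  · simpa only [if_neg hy.not_ge, if_neg hx.not_ge] using hg' x y hxy

variable [NormedSpace ℝ E]

lemma norm_le_of_mem_segment {p q x : E} {R : ℝ} (hp : ‖p‖ ≤ R) (hq : ‖q‖ ≤ R)
    (hx : x ∈ segment ℝ p q) : ‖x‖ ≤ R :=
  mem_closedBall_zero_iff.1 <| (convex_closedBall 0 R).segment_subset
    (mem_closedBall_zero_iff.2 hp) (mem_closedBall_zero_iff.2 hq) hx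

/-- The affine path which is at `P` at time `s` and at `Q` at time `t`. -/
def affinePath (s t : ℝ) (P Q : E) (r : ℝ) : E :=
  AffineMap.lineMap P Q ((r - s) / (t - s))

lemma affinePath_left (s t : ℝ) (P Q : E) : affinePath s t P Q s = P := by
  rw [affinePath, sub_self, zero_div, AffineMap.lineMap_apply_zero]

lemma affinePath_right (hst : s < t) (P Q : E) : affinePath s t P Q t = Q := by
  rw [affinePath, div_self (sub_pos.2 hst).ne', AffineMap.lineMap_apply_one]

lemma affinePath_mem_segment (hst : s < t) (P Q : E) {r : ℝ} (hr : r ∈ Icc s t) :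
    affinePath s t P Q r ∈ segment ℝ P Q := by
  rw [segment_eq_image_lineMap]
  have ht := sub_pos.2 hst
  exact mem_image_of_mem _
    ⟨div_nonneg (sub_nonneg.2 hr.1) ht.le, (div_le_one ht).2 (sub_le_sub_right hr.2 s)⟩

lemma hasDerivAt_affinePath (s t : ℝ) (P Q : E) (r : ℝ) :
    HasDerivAt (affinePath s t P Q) ((t - s)⁻¹ • (Q - P)) r := by
  have htime : HasDerivAt (fun r => (r - s) / (t - s)) (t - s)⁻¹ r := by
    simpa only [one_div] using ((hasDerivAt_id' r).sub_const s).div_const (t - s)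
  exact AffineMap.hasDerivAt_lineMap.scomp r htime

lemma lipschitzWith_affinePath (hst : s < t) {P Q : E} (h : ‖Q - P‖ ≤ K * (t - s)) :
    LipschitzWith K (affinePath s t P Q) := by
  have ht := sub_pos.2 hst
  have hderiv := hasDerivAt_affinePath s t P Q
  refine lipschitzWith_of_nnnorm_deriv_le (fun r => (hderiv r).differentiableAt) fun r => ?_
  rw [(hderiv r).deriv, ← NNReal.coe_le_coe, coe_nnnorm, norm_smul, norm_inv,
    Real.norm_of_nonneg ht.le, inv_mul_le_iff₀ ht, mul_comm]
  exact h

lemma exists_lipschitzWith_eqOn_affinePath (hf : LipschitzWith K f) (hst : s < t) :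
    ∃ g, LipschitzWith K g ∧ EqOn f g (Iic s) ∧ EqOn f g (Ici t) ∧
      EqOn (affinePath s t (f s) (f t)) g (Icc s t) := by
  have hchord : LipschitzWith K (affinePath s t (f s) (f t)) :=
    lipschitzWith_affinePath hst <| by
      simpa [abs_of_pos (sub_pos.2 hst)] using hf.norm_sub_le t s
  have hright : f t = affinePath s t (f s) (f t) t := (affinePath_right hst _ _).symm
  have hleft : f s = affinePath s t (f s) (f t) s := (affinePath_left s t _ _).symm
  refine ⟨fun r => if r ≤ s then f r else if r ≤ t then affinePath s t (f s) (f t) r else f r,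
    lipschitzWith_ite_le hf (lipschitzWith_ite_le hchord hf hright.symm)
      (by rw [if_pos hst.le]; exact hleft), fun r hr => (if_pos hr).symm, fun r hr => ?_,
    fun r hr => ?_⟩
  · rcases (mem_Ici.1 hr).eq_or_lt with rfl | hlt
    · simp only [if_neg hst.not_ge, le_refl, if_true, hright.symm]
    · simp only [if_neg (hst.trans hlt).not_ge, if_neg hlt.not_ge]
  · rcases hr.1.eq_or_lt with rfl | hlt
    · simp only [le_refl, if_true, hleft.symm]
    · simp only [if_neg hlt.not_ge, if_pos hr.2]

lemma action_lengthDensity_affinePath_le {F : ℝ × ℝ → ℝ} (hF₀ : ∀ p, 0 ≤ F p) (hst : s < t)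
    {P Q : ℝ × ℝ} {M : ℝ} (hM : ∀ p ∈ segment ℝ P Q, F p ≤ M) :
    action (lengthDensity F) s t (affinePath s t P Q) ≤ 2 * M * ‖Q - P‖ := by
  have ht := sub_pos.2 hst
  have hM₀ : 0 ≤ M := (hF₀ P).trans (hM P (left_mem_segment ℝ P Q))
  have hbound : ∀ r ∈ uIoc s t, ‖lengthDensity F (affinePath s t P Q r)
      (deriv (affinePath s t P Q) r)‖ ≤ M * ((t - s)⁻¹ * (2 * ‖Q - P‖)) := fun r hr => by
    rw [uIoc_of_le hst.le] at hr
    rw [Real.norm_of_nonneg (lengthDensity_nonneg hF₀ _ _), (hasDerivAt_affinePath s t P Q r).deriv,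
      lengthDensity, enorm2_smul_of_pos (inv_pos.2 ht)]
    gcongr
    · exact mul_nonneg (inv_pos.2 ht).le (enorm2_nonneg _)
    · exact hM _ (affinePath_mem_segment hst P Q (Ioc_subset_Icc_self hr))
    · exact enorm2_le_two_mul_norm _
  calc action (lengthDensity F) s t (affinePath s t P Q)
      ≤ M * ((t - s)⁻¹ * (2 * ‖Q - P‖)) * |t - s| :=
        (le_abs_self _).trans (intervalIntegral.norm_integral_le_of_norm_le_const hbound)
    _ = 2 * M * ‖Q - P‖ := by rw [abs_of_pos ht]; field_simp

end Chord

section Penalized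

variable {F : ℝ × ℝ → ℝ} {h : ℝ × ℝ → ℝ} {R C₀ κ : ℝ} {γ β : ℝ → ℝ × ℝ} {a b s t : ℝ}

lemma action_le_penalized (hκ : 0 ≤ κ) (A : ℝ) :
    action (lengthDensity F) a b γ ≤ penalized F κ A a b γ :=
  le_add_of_nonneg_right (by positivity)

lemma exists_isUnitTimeCurve_penalized_eq (hγ : LocallyLipschitz γ) (hab : a < b) {L : ℝ≥0}
    (hL : normLength a b γ ≤ L) (F : ℝ × ℝ → ℝ) (κ A : ℝ) :
    ∃ β, IsUnitTimeCurve (L + 1) (γ a) (γ b) β ∧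
      penalized F κ A 0 1 β = penalized F κ A a b γ := by
  obtain ⟨β, hβ, hact⟩ := exists_isUnitTimeCurve_action_eq hγ hab hL
  exact ⟨β, hβ, by
    simp only [penalized, hact _ posHomogeneous_lengthDensity, hact _ posHomogeneous_areaDensity]⟩

variable (hF : Continuous F) (hF₀ : ∀ p, 0 ≤ F p) (hA : IsAreaPotential F R C₀ h) (hκ : 0 ≤ κ)
include hF hF₀ hA hκ

-- The two discarded pieces are loops, so their areas are at most `C₀` times their lengths.
lemma penalized_le_of_subinterval (hκC : κ * C₀ ≤ 1) (A : ℝ) (hγ : LocallyLipschitz γ)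
    (has : a ≤ s) (hst : s ≤ t) (htb : t ≤ b) (hR : ∀ r ∈ Icc a b, ‖γ r‖ ≤ R) (hs : γ s = γ a)
    (ht : γ t = γ b) : penalized F κ A s t γ ≤ penalized F κ A a b γ := by
  have hloop {x y : ℝ} (hxy : x ≤ y) (hsub : Icc x y ⊆ Icc a b) (heq : γ y = γ x) :
      |action areaDensity x y γ| ≤ C₀ * action (lengthDensity F) x y γ := by
    simpa only [heq, sub_self, add_zero] using hA x y hxy γ hγ fun r hr => hR r (hsub hr)
  have hleft := hloop has (Icc_subset_Icc_right (hst.trans htb)) hs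
  have hright := hloop htb (Icc_subset_Icc_left (has.trans hst)) ht.symm
  have hsplit {Φ : ℝ × ℝ → ℝ × ℝ → ℝ} (hΦ : Continuous (Function.uncurry Φ)) :
      action Φ a b γ = action Φ a s γ + action Φ s t γ + action Φ t b γ := by
    rw [action_add_adjacent hΦ hγ, action_add_adjacent hΦ hγ]
  have hlength₁ := action_nonneg (γ := γ) (lengthDensity_nonneg hF₀) has
  have hlength₂ := action_nonneg (γ := γ) (lengthDensity_nonneg hF₀) htb
  rw [penalized, penalized, hsplit continuous_areaDensity, hsplit (continuous_lengthDensity hF)]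
  set e₁ := action (lengthDensity F) a s γ
  set e₂ := action (lengthDensity F) t b γ
  set A₁ := action areaDensity a s γ
  set A₂ := action areaDensity t b γ
  set A' := action areaDensity s t γ
  have harea : |A' - A| ≤ |A₁ + A' + A₂ - A| + C₀ * (e₁ + e₂) := calc
    |A' - A| = |(A₁ + A' + A₂ - A) - (A₁ + A₂)| := by ring_nf
    _ ≤ |A₁ + A' + A₂ - A| + |A₁ + A₂| := abs_sub _ _
    _ ≤ |A₁ + A' + A₂ - A| + C₀ * (e₁ + e₂) := by linarith [abs_add_le A₁ A₂]
  nlinarith [mul_le_mul_of_nonneg_left harea hκ,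
    mul_le_mul_of_nonneg_right hκC (add_nonneg hlength₁ hlength₂)]

lemma action_le_three_mul_action (hκC : κ * C₀ ≤ 1 / 2) {A : ℝ} (hγ : LocallyLipschitz γ)
    (hβ : LocallyLipschitz β) (has : a ≤ s) (hst : s ≤ t) (htb : t ≤ b)
    (hγR : ∀ r ∈ Icc s t, ‖γ r‖ ≤ R) (hβR : ∀ r ∈ Icc s t, ‖β r‖ ≤ R)
    (hleft : EqOn γ β (Icc a s)) (hright : EqOn γ β (Icc t b))
    (hle : penalized F κ A a b γ ≤ penalized F κ A a b β) :
    action (lengthDensity F) s t γ ≤ 3 * action (lengthDensity F) s t β := by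
  have hpotγ := hA s t hst γ hγ hγR
  have hpotβ := hA s t hst β hβ hβR
  rw [hleft (right_mem_Icc.2 has), hright (left_mem_Icc.2 htb)] at hpotγ
  have hsplit {Φ : ℝ × ℝ → ℝ × ℝ → ℝ} (hΦ : Continuous (Function.uncurry Φ)) :
      action Φ a b γ = action Φ a b β - action Φ s t β + action Φ s t γ := by
    rw [← action_add_adjacent hΦ hγ a s b, ← action_add_adjacent hΦ hγ s t b,
      ← action_add_adjacent hΦ hβ a s b, ← action_add_adjacent hΦ hβ s t b,
      action_congr_of_eqOn_Ioo has (hleft.mono Ioo_subset_Icc_self),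
      action_congr_of_eqOn_Ioo htb (hright.mono Ioo_subset_Icc_self)]
    ring
  have hγ₀ := action_nonneg (γ := γ) (lengthDensity_nonneg hF₀) hst
  have hβ₀ := action_nonneg (γ := β) (lengthDensity_nonneg hF₀) hst
  rw [penalized, penalized, hsplit continuous_areaDensity,
    hsplit (continuous_lengthDensity hF)] at hle
  set eγ := action (lengthDensity F) s t γ
  set eβ := action (lengthDensity F) s t β
  set Aγ := action areaDensity s t γ
  set Aβ := action areaDensity s t β
  set A' := action areaDensity a b β
  set δ := h (β t) - h (β s)
  have harea : |A' - A| ≤ |A' - Aβ + Aγ - A| + C₀ * (eβ + eγ) := calc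
    |A' - A| = |(A' - Aβ + Aγ - A) + ((Aβ + δ) - (Aγ + δ))| := by ring_nf
    _ ≤ |A' - Aβ + Aγ - A| + (|Aβ + δ| + |Aγ + δ|) :=
        (abs_add_le _ _).trans (by gcongr; exact abs_sub _ _)
    _ ≤ |A' - Aβ + Aγ - A| + C₀ * (eβ + eγ) := by linarith
  nlinarith [mul_le_mul_of_nonneg_left harea hκ,
    mul_le_mul_of_nonneg_right hκC (add_nonneg hβ₀ hγ₀)]

end Penalized

section ConstrainedMinimizer

variable {F : ℝ × ℝ → ℝ} {pm pp : ℝ × ℝ} {R C c : ℝ} {C₀ : ℝ} {h : ℝ × ℝ → ℝ} {κ A : ℝ}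
  {Λ : ℝ≥0} {γ : ℝ → ℝ × ℝ}

lemma action_le_mul_norm_sub_of_forall_penalized_le (hF : Continuous F) (hF₀ : ∀ p, 0 ≤ F p)
    (hA : IsAreaPotential F R C₀ h) (hκ : 0 ≤ κ) (hκC : κ * C₀ ≤ 1 / 2)
    (hγ : IsUnitTimeCurve Λ pm pp γ)
    (hmin : ∀ β, IsUnitTimeCurve Λ pm pp β → penalized F κ A 0 1 γ ≤ penalized F κ A 0 1 β)
    (hR : ∀ t ∈ Icc (0 : ℝ) 1, ‖γ t‖ ≤ R) {s t M : ℝ} (hs : 0 ≤ s) (hst : s ≤ t) (ht : t ≤ 1)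
    (hM : ∀ p ∈ segment ℝ (γ s) (γ t), F p ≤ M) :
    action (lengthDensity F) s t γ ≤ 6 * M * ‖γ t - γ s‖ := by
  obtain rfl | hst := hst.eq_or_lt
  · simp [action]
  obtain ⟨β, hβ, hleft, hright, hchord⟩ :=
    exists_lipschitzWith_eqOn_affinePath hγ.lipschitzWith hst
  have hβR : ∀ r ∈ Icc s t, ‖β r‖ ≤ R := fun r hr =>
    norm_le_of_mem_segment (hR s ⟨hs, hst.le.trans ht⟩) (hR t ⟨hs.trans hst.le, ht⟩)
      (hchord hr ▸ affinePath_mem_segment hst _ _ hr)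
  have hβcurve : IsUnitTimeCurve Λ pm pp β :=
    ⟨hβ, (hleft hs).symm.trans hγ.apply_zero, (hright ht).symm.trans hγ.apply_one⟩
  calc action (lengthDensity F) s t γ
      ≤ 3 * action (lengthDensity F) s t β :=
        action_le_three_mul_action hF hF₀ hA hκ hκC hγ.lipschitzWith.locallyLipschitz
          hβ.locallyLipschitz hs hst.le ht (fun r hr => hR r ⟨hs.trans hr.1, hr.2.trans ht⟩) hβR
          (hleft.mono Icc_subset_Iic_self) (hright.mono Icc_subset_Ici_self) (hmin β hβcurve)
    _ = 3 * action (lengthDensity F) s t (affinePath s t (γ s) (γ t)) := by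
        rw [action_congr_of_eqOn_Ioo hst.le (hchord.mono Ioo_subset_Icc_self)]
    _ ≤ 3 * (2 * M * ‖γ t - γ s‖) := by
        gcongr
        exact action_lengthDensity_affinePath_le hF₀ hst hM
    _ = 6 * M * ‖γ t - γ s‖ := by ring

variable (hB : LinearWellBounds F pm pp R C c) (hA : IsAreaPotential F R C₀ h) (hκ : 0 ≤ κ)
  (hκC : κ * C₀ ≤ 1 / 2)
include hB hA hκ hκC

lemma action_le_mul_sq_of_forall_penalized_le (hγ : IsUnitTimeCurve Λ pm pp γ)
    (hmin : ∀ β, IsUnitTimeCurve Λ pm pp β → penalized F κ A 0 1 γ ≤ penalized F κ A 0 1 β)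
    (hR : ∀ t ∈ Icc (0 : ℝ) 1, ‖γ t‖ ≤ R) {t : ℝ} (ht : t ∈ Icc (0 : ℝ) 1) :
    action (lengthDensity F) 0 t γ ≤ 6 * C * ‖γ t - pm‖ ^ 2 ∧
      action (lengthDensity F) t 1 γ ≤ 6 * C * ‖γ t - pp‖ ^ 2 := by
  have hC := hB.C_pos
  have hpiece {s t M : ℝ} := action_le_mul_norm_sub_of_forall_penalized_le (s := s) (t := t)
    (M := M) hB.continuous hB.nonneg hA hκ hκC hγ hmin hR
  constructor
  · have hle := hpiece (M := C * ‖γ t - pm‖) le_rfl ht.1 ht.2 fun p hp => by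
      rw [hγ.apply_zero] at hp
      refine (hB.le_m p (norm_le_of_mem_segment hB.norm_m_le (hR t ht) hp)).trans ?_
      gcongr
      exact norm_sub_le_of_mem_segment hp
    rw [hγ.apply_zero] at hle
    linarith
  · have hle := hpiece (M := C * ‖γ t - pp‖) ht.1 ht.2 le_rfl fun p hp => by
      rw [hγ.apply_one] at hp
      refine (hB.le_p p (norm_le_of_mem_segment (hR t ht) hB.norm_p_le hp)).trans ?_
      rw [segment_symm] at hp
      gcongr
      exact norm_sub_le_of_mem_segment hp
    rw [hγ.apply_one, norm_sub_rev pp] at hle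
    linarith

lemma exists_isUnitTimeCurve_penalized_le (hγ : IsUnitTimeCurve Λ pm pp γ)
    (hmin : ∀ β, IsUnitTimeCurve Λ pm pp β → penalized F κ A 0 1 γ ≤ penalized F κ A 0 1 β)
    (hR : ∀ t ∈ Icc (0 : ℝ) 1, ‖γ t‖ ≤ R) :
    ∃ β, IsUnitTimeCurve ((4 * (6 * C / c)).toNNReal + 1) pm pp β ∧
      penalized F κ A 0 1 β ≤ penalized F κ A 0 1 γ := by
  have hC := hB.C_pos
  have hlip := hγ.lipschitzWith.locallyLipschitz
  obtain ⟨s, t, hs, hst, ht, hγs, hγt, hw⟩ := exists_Ioo_forall_ne hlip.continuous zero_le_one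
    (by rw [hγ.apply_zero, hγ.apply_one]; exact hB.wells_ne)
  have hsub : Icc s t ⊆ Icc 0 1 := Icc_subset_Icc hs ht
  have hrestrict := penalized_le_of_subinterval hB.continuous hB.nonneg hA hκ
    (hκC.trans (by norm_num)) A hlip hs hst.le ht hR hγs hγt
  rw [hγ.apply_zero] at hγs hw
  rw [hγ.apply_one] at hγt hw
  have hshrink {x y x' y' : ℝ} (hx : x' ≤ x) (hy : y ≤ y') :=
    action_mono_interval (continuous_lengthDensity hB.continuous) (lengthDensity_nonneg hB.nonneg)
      hlip hx hy
  have hnear {r : ℝ} (hr : r ∈ Icc s t) :=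
    action_le_mul_sq_of_forall_penalized_le hB hA hκ hκC hγ hmin hR (hsub hr)
  have hlength : normLength s t γ ≤ 4 * (6 * C / c) :=
    hB.normLength_le hlip hst hγs hγt (fun r hr => hR r (hsub hr)) hw (by positivity)
      (fun r hr => (hshrink hs le_rfl).trans (hnear hr).1)
      (fun r hr => (hshrink le_rfl ht).trans (hnear hr).2)
  obtain ⟨β, hβ, hβγ⟩ := exists_isUnitTimeCurve_penalized_eq hlip hst
    (hlength.trans (Real.le_coe_toNNReal _)) F κ A
  exact ⟨β, hγs ▸ hγt ▸ hβ, hβγ.trans_le hrestrict⟩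

end ConstrainedMinimizer

section GlobalMinimizer

/-- Curves of degenerate length at most `E₁` that start at `p` stay in the ball of radius `R`. -/
def ConfinesCurves (F : ℝ × ℝ → ℝ) (p : ℝ × ℝ) (E₁ R : ℝ) : Prop :=
  ∀ a b γ, LocallyLipschitz γ → γ a = p → action (lengthDensity F) a b γ ≤ E₁ →
    ∀ t ∈ Icc a b, ‖γ t‖ ≤ R

variable {F : ℝ × ℝ → ℝ} {pm pp : ℝ × ℝ} {R C c C₀ κ A E₁ : ℝ} {h : ℝ × ℝ → ℝ}
  {γ₀ : ℝ → ℝ × ℝ} (hB : LinearWellBounds F pm pp R C c) (hA : IsAreaPotential F R C₀ h)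
  (hκ : 0 ≤ κ) (hκC : κ * C₀ ≤ 1 / 2) (hconf : ConfinesCurves F pm E₁ R)
include hB hA hκ hκC hconf

-- The constant in `exists_isUnitTimeCurve_penalized_le` does not depend on the Lipschitz constant
-- of the class, so a minimizer in one large enough class is a minimizer in all of them.
lemma exists_isUnitTimeCurve_forall_forall_penalized_le {Λ₀ : ℝ≥0}
    (hγ₀ : IsUnitTimeCurve Λ₀ pm pp γ₀) (hle : penalized F κ A 0 1 γ₀ ≤ E₁) :
    ∃ Λ γ, IsUnitTimeCurve Λ pm pp γ ∧ (∀ t ∈ Icc (0 : ℝ) 1, ‖γ t‖ ≤ R) ∧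
      ∀ Λ' β, IsUnitTimeCurve Λ' pm pp β → penalized F κ A 0 1 γ ≤ penalized F κ A 0 1 β := by
  have hexists (Λ : ℝ≥0) (hΛ : Λ₀ ≤ Λ) : ∃ γ, IsUnitTimeCurve Λ pm pp γ ∧
      (∀ β, IsUnitTimeCurve Λ pm pp β → penalized F κ A 0 1 γ ≤ penalized F κ A 0 1 β) ∧
      ∀ t ∈ Icc (0 : ℝ) 1, ‖γ t‖ ≤ R := by
    obtain ⟨γ, hγ, hmin⟩ := exists_isUnitTimeCurve_forall_penalized_le hB.continuous hB.nonneg κ A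
      ⟨γ₀, hγ₀.weaken hΛ⟩
    exact ⟨γ, hγ, hmin, hconf 0 1 γ hγ.lipschitzWith.locallyLipschitz hγ.apply_zero <|
      (action_le_penalized hκ A).trans ((hmin γ₀ (hγ₀.weaken hΛ)).trans hle)⟩
  set Λ := max Λ₀ ((4 * (6 * C / c)).toNNReal + 1)
  obtain ⟨γ, hγ, hmin, hR⟩ := hexists Λ (le_max_left _ _)
  refine ⟨Λ, γ, hγ, hR, fun Λ' β hβ => ?_⟩
  obtain ⟨ξ, hξ, hξmin, hξR⟩ := hexists (max Λ₀ Λ') (le_max_left _ _)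
  obtain ⟨η, hη, hηξ⟩ := exists_isUnitTimeCurve_penalized_le hB hA hκ hκC hξ hξmin hξR
  calc penalized F κ A 0 1 γ ≤ penalized F κ A 0 1 η := hmin η (hη.weaken (le_max_right _ _))
    _ ≤ penalized F κ A 0 1 ξ := hηξ
    _ ≤ penalized F κ A 0 1 β := hξmin β (hβ.weaken (le_max_right _ _))

lemma exists_isCurve_forall_penalized_le (hγ₀ : IsCurve 0 1 γ₀ pm pp)
    (hle : penalized F κ A 0 1 γ₀ ≤ E₁) :
    ∃ a b γ, IsCurve a b γ pm pp ∧ (∀ t ∈ Ioo a b, γ t ≠ pm ∧ γ t ≠ pp) ∧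
      (∀ t ∈ Icc a b, ‖γ t‖ ≤ R) ∧
      ∀ a' b' β, IsCurve a' b' β pm pp → penalized F κ A a b γ ≤ penalized F κ A a' b' β := by
  have hnormalize {a b : ℝ} {β : ℝ → ℝ × ℝ} (hβ : IsCurve a b β pm pp) :
      ∃ Λ η, IsUnitTimeCurve Λ pm pp η ∧ penalized F κ A 0 1 η = penalized F κ A a b β := by
    obtain ⟨hab, hlip, rfl, rfl⟩ := hβ
    have hlt : a < b := hab.lt_of_ne fun h => hB.wells_ne (congrArg β h)
    exact ⟨_, exists_isUnitTimeCurve_penalized_eq hlip hlt (Real.le_coe_toNNReal _) F κ A⟩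
  obtain ⟨Λ₀, η₀, hη₀, hη₀eq⟩ := hnormalize hγ₀
  obtain ⟨Λ, γ, hγ, hR, hmin⟩ := exists_isUnitTimeCurve_forall_forall_penalized_le hB hA hκ hκC
    hconf hη₀ (hη₀eq.trans_le hle)
  have hlip := hγ.lipschitzWith.locallyLipschitz
  obtain ⟨a, b, ha, hab, hb, hγa, hγb, hw⟩ := exists_Ioo_forall_ne hlip.continuous zero_le_one
    (by rw [hγ.apply_zero, hγ.apply_one]; exact hB.wells_ne)
  have hrestrict := penalized_le_of_subinterval hB.continuous hB.nonneg hA hκ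
    (hκC.trans (by norm_num)) A hlip ha hab.le hb hR hγa hγb
  rw [hγ.apply_zero] at hγa hw
  rw [hγ.apply_one] at hγb hw
  refine ⟨a, b, γ, ⟨hab.le, hlip, hγa, hγb⟩, hw, fun t ht => hR t (Icc_subset_Icc ha hb ht),
    fun a' b' β hβ => ?_⟩
  obtain ⟨Λ', η, hη, hηeq⟩ := hnormalize hβ
  exact hrestrict.trans ((hmin Λ' η hη).trans_eq hηeq)

end GlobalMinimizer

/-! ### Displacements along vector fields vanishing at the wells -/

section Displacement

variable {E : Type*} [NormedAddCommGroup E] [NormedSpace ℝ E] {X : E → E} {γ : ℝ → E}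

/-- The displacement `p ↦ p + s X(p)` along a vector field `X`, used to vary curves. -/
def displace (X : E → E) (s : ℝ) (p : E) : E := p + s • X p

/-- The Lagrangian `(p, v) ↦ Φ(T p, DT(p) v)` for `T = displace X s`: the pullback of `Φ`. -/
def displacedLagrangian (X : E → E) (s : ℝ) (Φ : E → E → ℝ) (p v : E) : ℝ :=
  Φ (displace X s p) (v + s • fderiv ℝ X p v)

lemma locallyLipschitz_displace_comp (hX : ContDiff ℝ 1 X) (s : ℝ) (hγ : LocallyLipschitz γ) :
    LocallyLipschitz (displace X s ∘ γ) := by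
  have hdisplace : ContDiff ℝ 1 (displace X s) := by
    unfold displace
    fun_prop
  exact hdisplace.locallyLipschitz.comp hγ

lemma continuous_displacedLagrangian (hX : ContDiff ℝ 1 X) (s : ℝ) {Φ : E → E → ℝ}
    (hΦ : Continuous (Function.uncurry Φ)) :
    Continuous (Function.uncurry (displacedLagrangian X s Φ)) := by
  have hderiv : Continuous fun x : E × E => fderiv ℝ X x.1 x.2 :=
    hX.continuous_fderiv_apply one_ne_zero
  have hX₀ := hX.continuous
  have hpair : Continuous fun x : E × E => (displace X s x.1, x.2 + s • fderiv ℝ X x.1 x.2) := by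
    unfold displace
    fun_prop
  exact hΦ.comp hpair

lemma action_displace_comp [FiniteDimensional ℝ E] (hX : ContDiff ℝ 1 X) (s : ℝ)
    (Φ : E → E → ℝ) (hγ : LocallyLipschitz γ) (a b : ℝ) :
    action Φ a b (displace X s ∘ γ) = action (displacedLagrangian X s Φ) a b γ := by
  refine intervalIntegral.integral_congr_ae ?_
  filter_upwards [ae_differentiableAt_of_locallyLipschitz hγ] with t ht _
  have hXγ := (hX.differentiable one_ne_zero (γ t)).hasFDerivAt.comp_hasDerivAt t ht.hasDerivAt
  have hderiv : deriv (displace X s ∘ γ) t = deriv γ t + s • fderiv ℝ X (γ t) (deriv γ t) :=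
    (ht.hasDerivAt.add (hXγ.const_smul s)).deriv
  rw [hderiv, displacedLagrangian, Function.comp_apply]

end Displacement

section SecondOrder

lemma exists_eq_mul_of_abs_le_mul {x y k : ℝ} (hx : 0 ≤ x) (hk : 0 ≤ k) (h : |y| ≤ k * x) :
    ∃ r, |r| ≤ k ∧ y = x * r := by
  refine ⟨y / x, ?_, ?_⟩
  · rw [abs_div, abs_of_nonneg hx]
    exact div_le_of_le_mul₀ hx hk h
  · refine (mul_div_cancel_of_imp' fun hx₀ => ?_).symm
    exact abs_nonpos_iff.1 (h.trans_eq (by rw [hx₀, mul_zero]))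

lemma sqrt_le_sqrt_mul_of_le_mul {x y z : ℝ} (hx : 0 ≤ x) (hy : 0 ≤ y) (h : y ≤ x * (1 + z)) :
    √y ≤ √x * (1 + z / 2) := by
  rcases hx.eq_or_lt with rfl | hx
  · rw [zero_mul] at h
    rw [le_antisymm h hy, Real.sqrt_zero, zero_mul]
  have hz : 0 ≤ 1 + z := nonneg_of_mul_nonneg_right (hy.trans h) hx
  have hsqrt : √(1 + z) ≤ 1 + z / 2 :=
    Real.sqrt_le_iff.2 ⟨by linarith, by nlinarith [sq_nonneg z]⟩
  calc √y ≤ √(x * (1 + z)) := Real.sqrt_le_sqrt h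
    _ = √x * √(1 + z) := Real.sqrt_mul hx.le _
    _ ≤ √x * (1 + z / 2) := by gcongr

lemma second_order_mul_le {r₁ r₂ k₁ k₂ τ : ℝ} (h₁ : |r₁| ≤ k₁) (h₂ : |r₂| ≤ k₂) (hτ : |τ| ≤ 1) :
    (1 + τ * r₁ + k₁ * τ ^ 2) * (1 + τ * r₂ + k₂ * τ ^ 2) ≤
      1 + τ * (r₁ + r₂) + (k₁ + k₂ + 4 * (k₁ * k₂)) * τ ^ 2 := by
  have hk₁ : 0 ≤ k₁ := (abs_nonneg _).trans h₁
  have hk₂ : 0 ≤ k₂ := (abs_nonneg _).trans h₂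
  have hfactor {r k : ℝ} (hr : |r| ≤ k) (hk : 0 ≤ k) : |r + k * τ| ≤ 2 * k := by
    calc |r + k * τ| ≤ |r| + |k| * |τ| := (abs_add_le _ _).trans_eq (by rw [abs_mul])
      _ ≤ k + k * 1 := by rw [abs_of_nonneg hk]; gcongr
      _ = 2 * k := by ring
  have hcross : (r₁ + k₁ * τ) * (r₂ + k₂ * τ) ≤ 4 * (k₁ * k₂) := by
    calc (r₁ + k₁ * τ) * (r₂ + k₂ * τ) ≤ |r₁ + k₁ * τ| * |r₂ + k₂ * τ| :=
          (le_abs_self _).trans_eq (abs_mul _ _)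
      _ ≤ 2 * k₁ * (2 * k₂) := by gcongr; exacts [hfactor h₁ hk₁, hfactor h₂ hk₂]
      _ = 4 * (k₁ * k₂) := by ring
  linarith [mul_le_mul_of_nonneg_right hcross (sq_nonneg τ)]

lemma exists_enorm2_add_smul_le {v w : ℝ × ℝ} {M : ℝ} (hM : 0 ≤ M)
    (hw : enorm2 w ≤ M * enorm2 v) :
    ∃ r, |r| ≤ M + M ^ 2 ∧
      ∀ τ : ℝ, enorm2 (v + τ • w) ≤ enorm2 v * (1 + τ * r + (M + M ^ 2) * τ ^ 2) := by
  have hdot : |dotForm v w| ≤ M * enorm2 v ^ 2 := by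
    have habs : |dotForm v w| ≤ enorm2 v * enorm2 w := by
      refine abs_le_of_sq_le_sq ?_ (mul_nonneg (enorm2_nonneg v) (enorm2_nonneg w))
      rw [mul_pow, enorm2_sq, enorm2_sq, dotForm_apply]
      nlinarith [sq_nonneg (v.1 * w.2 - v.2 * w.1)]
    nlinarith [mul_le_mul_of_nonneg_left hw (enorm2_nonneg v)]
  obtain ⟨r, hr, hrv⟩ := exists_eq_mul_of_abs_le_mul (sq_nonneg (enorm2 v)) hM hdot
  refine ⟨r, hr.trans (le_add_of_nonneg_right (sq_nonneg M)), fun τ => ?_⟩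
  have hexpand : enorm2 (v + τ • w) ^ 2 =
      enorm2 v ^ 2 + 2 * τ * dotForm v w + τ ^ 2 * enorm2 w ^ 2 := by
    simp only [enorm2_sq, dotForm_apply, Prod.fst_add, Prod.snd_add, Prod.smul_fst, Prod.smul_snd,
      smul_eq_mul]
    ring
  have hsq : enorm2 (v + τ • w) ^ 2 ≤ enorm2 v ^ 2 * (1 + (2 * τ * r + M ^ 2 * τ ^ 2)) := by
    have hw₂ := pow_le_pow_left₀ (enorm2_nonneg w) hw 2
    rw [hexpand, hrv]
    nlinarith [mul_le_mul_of_nonneg_left hw₂ (sq_nonneg τ)]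
  have hsqrt := sqrt_le_sqrt_mul_of_le_mul (sq_nonneg _) (sq_nonneg _) hsq
  rw [Real.sqrt_sq (enorm2_nonneg _), Real.sqrt_sq (enorm2_nonneg _)] at hsqrt
  refine hsqrt.trans (mul_le_mul_of_nonneg_left ?_ (enorm2_nonneg v))
  nlinarith [mul_nonneg hM (sq_nonneg τ), mul_nonneg (sq_nonneg M) (sq_nonneg τ)]

end SecondOrder

namespace IsC2TwoWell

section General

variable {E : Type*} [NormedAddCommGroup E] [NormedSpace ℝ E] [FiniteDimensional ℝ E]
  {W : E → ℝ} {pm pp : E} {X : E → E} {R : ℝ}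

lemma exists_abs_fderiv_apply_le_mul (hW : IsC2TwoWell W pm pp) (hX : LocallyLipschitz X)
    (hXm : X pm = 0) (hXp : X pp = 0) (hm : ‖pm‖ ≤ R) (hp : ‖pp‖ ≤ R) :
    ∃ k ≥ 0, ∀ p, ‖p‖ ≤ R → |fderiv ℝ W p (X p)| ≤ k * W p ∧ ‖X p‖ ^ 2 ≤ k * W p := by
  obtain ⟨k, hk, hXle⟩ := exists_norm_le_mul_dist_wells hX hW.wells_ne hXm hXp hm hp
  obtain ⟨C, hC, hfderiv⟩ := hW.exists_norm_fderiv_le hm hp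
  obtain ⟨c, hc, hquad⟩ := hW.exists_mul_sq_le R
  refine ⟨(C * k + k ^ 2) / c, by positivity, fun p hpR => ?_⟩
  set ρ := ‖p - pm‖ * ‖p - pp‖
  have : 0 ≤ ρ := by positivity
  have hmul : (C * k + k ^ 2) * ρ ^ 2 ≤ (C * k + k ^ 2) / c * W p := by
    calc (C * k + k ^ 2) * ρ ^ 2 = (C * k + k ^ 2) / c * (c * ρ ^ 2) := by field_simp
      _ ≤ (C * k + k ^ 2) / c * W p := by gcongr; exact hquad p hpR
  constructor
  · calc |fderiv ℝ W p (X p)| ≤ ‖fderiv ℝ W p‖ * ‖X p‖ := (fderiv ℝ W p).le_opNorm _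
      _ ≤ C * ρ * (k * ρ) := by gcongr; exacts [hfderiv p hpR, hXle p hpR]
      _ ≤ (C * k + k ^ 2) * ρ ^ 2 := by nlinarith [mul_nonneg (sq_nonneg k) (sq_nonneg ρ)]
      _ ≤ (C * k + k ^ 2) / c * W p := hmul
  · calc ‖X p‖ ^ 2 ≤ (k * ρ) ^ 2 := by gcongr; exact hXle p hpR
      _ ≤ (C * k + k ^ 2) * ρ ^ 2 := by nlinarith [mul_nonneg (mul_pos hC hk).le (sq_nonneg ρ)]
      _ ≤ (C * k + k ^ 2) / c * W p := hmul

lemma exists_sqrt_apply_displace_le (hW : IsC2TwoWell W pm pp) (hX : LocallyLipschitz X)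
    (hXm : X pm = 0) (hXp : X pp = 0) (hm : ‖pm‖ ≤ R) (hp : ‖pp‖ ≤ R) :
    ∃ k ≥ 0, ∀ p, ‖p‖ ≤ R → ∃ r, |r| ≤ k ∧ ∀ τ : ℝ, |τ| ≤ 1 →
      √(W (displace X τ p)) ≤ √(W p) * (1 + τ * r + k * τ ^ 2) := by
  have := FiniteDimensional.proper ℝ E
  obtain ⟨B, hB⟩ := (isCompact_closedBall (0 : E) R).exists_bound_of_continuousOn
    hX.continuous.continuousOn
  obtain ⟨k, hk, hbounds⟩ := hW.exists_abs_fderiv_apply_le_mul hX hXm hXp hm hp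
  obtain ⟨C, hC, htaylor⟩ := exists_abs_sub_fderiv_le_mul_sq hW.contDiff (R + B)
  refine ⟨(1 + C) * k, by positivity, fun p hpR => ?_⟩
  obtain ⟨hfirst, hsecond⟩ := hbounds p hpR
  obtain ⟨r, hr, hrW⟩ := exists_eq_mul_of_abs_le_mul (hW.nonneg p) hk hfirst
  refine ⟨r / 2, by rw [abs_div, abs_two]; nlinarith [abs_nonneg r], fun τ hτ => ?_⟩
  have hXB : ‖X p‖ ≤ B := hB p (mem_closedBall_zero_iff.2 hpR)
  have hτX : ‖τ • X p‖ ≤ B := by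
    rw [norm_smul, Real.norm_eq_abs]
    exact (mul_le_of_le_one_left (norm_nonneg _) hτ).trans hXB
  have hle := le_of_abs_le <| htaylor p (τ • X p)
    (hpR.trans (le_add_of_nonneg_right ((norm_nonneg _).trans hXB)))
    ((norm_add_le _ _).trans (add_le_add hpR hτX))
  rw [map_smul, smul_eq_mul, hrW, norm_smul, Real.norm_eq_abs, mul_pow, sq_abs] at hle
  have hpotential : W (displace X τ p) ≤ W p * (1 + (τ * r + C * k * τ ^ 2)) := by
    rw [displace]
    nlinarith [mul_le_mul_of_nonneg_left hsecond (mul_nonneg hC.le (sq_nonneg τ))]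
  refine (sqrt_le_sqrt_mul_of_le_mul (hW.nonneg p) (hW.nonneg _) hpotential).trans ?_
  refine mul_le_mul_of_nonneg_left ?_ (Real.sqrt_nonneg _)
  nlinarith [mul_nonneg hk (sq_nonneg τ), mul_nonneg (mul_nonneg hC.le hk) (sq_nonneg τ)]

end General

section Planar

variable {W : ℝ × ℝ → ℝ} {pm pp : ℝ × ℝ} {X : ℝ × ℝ → ℝ × ℝ} {R : ℝ}

lemma exists_lengthDensity_displace_le (hW : IsC2TwoWell W pm pp) (hX : ContDiff ℝ 1 X)
    (hXm : X pm = 0) (hXp : X pp = 0) (hm : ‖pm‖ ≤ R) (hp : ‖pp‖ ≤ R) :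
    ∃ K ≥ 0, ∀ p v, ‖p‖ ≤ R → ∃ r, ∀ τ : ℝ, |τ| ≤ 1 →
      displacedLagrangian X τ (lengthDensity fun p => √(W p)) p v ≤
        lengthDensity (fun p => √(W p)) p v * (1 + τ * r + K * τ ^ 2) := by
  obtain ⟨k, hk, hpotential⟩ :=
    hW.exists_sqrt_apply_displace_le hX.locallyLipschitz hXm hXp hm hp
  obtain ⟨B, hB⟩ := (isCompact_closedBall (0 : ℝ × ℝ) R).exists_bound_of_continuousOn
    (hX.continuous_fderiv one_ne_zero).continuousOn
  have hB₀ : 0 ≤ B := (norm_nonneg _).trans (hB pm (mem_closedBall_zero_iff.2 hm))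
  set M := 2 * B
  set k' := M + M ^ 2
  refine ⟨k + k' + 4 * (k * k'), by positivity, fun p v hpR => ?_⟩
  have hw : enorm2 (fderiv ℝ X p v) ≤ M * enorm2 v := by
    calc enorm2 (fderiv ℝ X p v) ≤ 2 * ‖fderiv ℝ X p v‖ := enorm2_le_two_mul_norm _
      _ ≤ 2 * (B * enorm2 v) := by
          gcongr
          exact (fderiv ℝ X p).le_of_opNorm_le_of_le (hB p (mem_closedBall_zero_iff.2 hpR))
            (norm_le_enorm2 v)
      _ = M * enorm2 v := by ring
  obtain ⟨r₁, hr₁, hsqrt⟩ := hpotential p hpR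
  obtain ⟨r₂, hr₂, hnorm⟩ := exists_enorm2_add_smul_le (by positivity) hw
  refine ⟨r₁ + r₂, fun τ hτ => ?_⟩
  calc √(W (displace X τ p)) * enorm2 (v + τ • fderiv ℝ X p v)
      ≤ √(W p) * (1 + τ * r₁ + k * τ ^ 2) * (enorm2 v * (1 + τ * r₂ + k' * τ ^ 2)) :=
        mul_le_mul (hsqrt τ hτ) (hnorm τ) (enorm2_nonneg _)
          ((Real.sqrt_nonneg _).trans (hsqrt τ hτ))
    _ = √(W p) * enorm2 v * ((1 + τ * r₁ + k * τ ^ 2) * (1 + τ * r₂ + k' * τ ^ 2)) := by ring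
    _ ≤ √(W p) * enorm2 v * (1 + τ * (r₁ + r₂) + (k + k' + 4 * (k * k')) * τ ^ 2) :=
        mul_le_mul_of_nonneg_left (second_order_mul_le hr₁ hr₂ hτ)
          (mul_nonneg (Real.sqrt_nonneg _) (enorm2_nonneg v))

-- The linear terms cancel after averaging, whatever their size.
lemma exists_action_displace_convex (hW : IsC2TwoWell W pm pp) (hX : ContDiff ℝ 1 X)
    (hXm : X pm = 0) (hXp : X pp = 0) (hm : ‖pm‖ ≤ R) (hp : ‖pp‖ ≤ R) :
    ∃ K ≥ 0, ∀ a b γ, a ≤ b → LocallyLipschitz γ → (∀ t ∈ Icc a b, ‖γ t‖ ≤ R) →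
      ∀ w₁ w₂ τ₁ τ₂ : ℝ, 0 ≤ w₁ → 0 ≤ w₂ → |τ₁| ≤ 1 → |τ₂| ≤ 1 → w₁ * τ₁ + w₂ * τ₂ = 0 →
        w₁ * action (lengthDensity fun p => √(W p)) a b (displace X τ₁ ∘ γ) +
            w₂ * action (lengthDensity fun p => √(W p)) a b (displace X τ₂ ∘ γ) ≤
          (w₁ + w₂ + K * (w₁ * τ₁ ^ 2 + w₂ * τ₂ ^ 2)) *
            action (lengthDensity fun p => √(W p)) a b γ := by
  obtain ⟨K, hK, hle⟩ := hW.exists_lengthDensity_displace_le hX hXm hXp hm hp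
  refine ⟨K, hK, fun a b γ hab hγ hR w₁ w₂ τ₁ τ₂ hw₁ hw₂ hτ₁ hτ₂ hw => ?_⟩
  have hΦ := continuous_lengthDensity hW.contDiff.continuous.sqrt
  have hint (τ : ℝ) := intervalIntegrable_action (continuous_displacedLagrangian hX τ hΦ) hγ a b
  rw [action_displace_comp hX _ _ hγ, action_displace_comp hX _ _ hγ, action, action, action,
    ← intervalIntegral.integral_const_mul, ← intervalIntegral.integral_const_mul,
    ← intervalIntegral.integral_const_mul,
    ← intervalIntegral.integral_add ((hint τ₁).const_mul _) ((hint τ₂).const_mul _)]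
  refine intervalIntegral.integral_mono_on hab (((hint τ₁).const_mul _).add
    ((hint τ₂).const_mul _)) ((intervalIntegrable_action hΦ hγ a b).const_mul _) fun t ht => ?_
  obtain ⟨r, hr⟩ := hle (γ t) (deriv γ t) (hR t ht)
  refine (add_le_add (mul_le_mul_of_nonneg_left (hr τ₁ hτ₁) hw₁)
    (mul_le_mul_of_nonneg_left (hr τ₂ hτ₂) hw₂)).trans_eq ?_
  linear_combination lengthDensity (fun p => √(W p)) (γ t) (deriv γ t) * r * hw

end Planar

end IsC2TwoWell

/-! ### The shear changing the area -/

section Shear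

variable {pm pp : ℝ × ℝ} {s a b : ℝ} {γ : ℝ → ℝ × ℝ}

/-- The vector orthogonal to `pp - pm` whose area form against `v` is `axialForm pm pp v`. -/
def shearDirection (pm pp : ℝ × ℝ) : ℝ × ℝ :=
  ((pp.1 - pm.1) ^ 2 + (pp.2 - pm.2) ^ 2)⁻¹ • (pp.2 - pm.2, -(pp.1 - pm.1))

/-- A vector field that vanishes at the wells, orthogonal to the line through them: displacing a
curve along it is a shear by a quadratic profile in the axial coordinate `ℓ`. -/
def shearField (pm pp p : ℝ × ℝ) : ℝ × ℝ :=
  (axialCoord pm pp p * (1 - axialCoord pm pp p)) • shearDirection pm pp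

lemma cross_shearDirection (v : ℝ × ℝ) :
    (shearDirection pm pp).1 * v.2 - (shearDirection pm pp).2 * v.1 = axialForm pm pp v := by
  simp only [shearDirection, axialForm, smul_apply, dotForm_apply, smul_eq_mul,
    Prod.smul_fst, Prod.smul_snd, Prod.fst_sub, Prod.snd_sub]
  ring

lemma contDiff_shearField {n : WithTop ℕ∞} : ContDiff ℝ n (shearField pm pp) := by
  have : ContDiff ℝ n (axialCoord pm pp) := contDiff_axialCoord
  unfold shearField
  fun_prop

lemma shearField_left : shearField pm pp pm = 0 := by
  rw [shearField, axialCoord_left, zero_mul, zero_smul]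

lemma shearField_right (hne : pm ≠ pp) : shearField pm pp pp = 0 := by
  rw [shearField, axialCoord_right hne, sub_self, mul_zero, zero_smul]

lemma hasFDerivAt_axialCoord_mul_one_sub (p : ℝ × ℝ) :
    HasFDerivAt (fun p => axialCoord pm pp p * (1 - axialCoord pm pp p))
      ((1 - 2 * axialCoord pm pp p) • axialForm pm pp) p := by
  have hcoord := hasFDerivAt_axialCoord (p := pm) (q := pp) p
  refine (hcoord.mul (hcoord.const_sub 1)).congr_fderiv ?_
  module

lemma fderiv_shearField_apply (p v : ℝ × ℝ) :
    fderiv ℝ (shearField pm pp) p v =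
      ((1 - 2 * axialCoord pm pp p) * axialForm pm pp v) • shearDirection pm pp := by
  have hderiv : HasFDerivAt (shearField pm pp) _ p :=
    (hasFDerivAt_axialCoord_mul_one_sub p).smul_const (shearDirection pm pp)
  rw [hderiv.fderiv]
  rfl

/-- A primitive of the one-form `T⋆(x dy) - x dy`, where `T` is the displacement by `s` along
`shearField pm pp`. -/
def shearPrimitive (pm pp : ℝ × ℝ) (s : ℝ) (p : ℝ × ℝ) : ℝ :=
  let ℓ := axialCoord pm pp p
  let e := shearDirection pm pp
  s * e.2 * (p.1 * (ℓ * (1 - ℓ))) + s ^ 2 * e.1 * e.2 / 2 * (ℓ * (1 - ℓ)) ^ 2 +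
    s * (ℓ ^ 2 * 2⁻¹ - ℓ ^ 3 * 3⁻¹)

lemma contDiff_shearPrimitive {n : WithTop ℕ∞} : ContDiff ℝ n (shearPrimitive pm pp s) := by
  have : ContDiff ℝ n (axialCoord pm pp) := contDiff_axialCoord
  unfold shearPrimitive
  fun_prop

lemma displacedLagrangian_areaDensity_sub (p v : ℝ × ℝ) :
    displacedLagrangian (shearField pm pp) s areaDensity p v - areaDensity p v =
      fderiv ℝ (shearPrimitive pm pp s) p v := by
  have hcoord := hasFDerivAt_axialCoord (p := pm) (q := pp) p
  have hprofile := hasFDerivAt_axialCoord_mul_one_sub (pm := pm) (pp := pp) p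
  have hfst : HasFDerivAt (fun p : ℝ × ℝ => p.1) (ContinuousLinearMap.fst ℝ ℝ ℝ) p :=
    hasFDerivAt_fst
  have hprimitive : HasFDerivAt (shearPrimitive pm pp s) _ p :=
    (((hfst.mul hprofile).const_mul (s * (shearDirection pm pp).2)).add
      ((hprofile.pow 2).const_mul
        (s ^ 2 * (shearDirection pm pp).1 * (shearDirection pm pp).2 / 2))).add
      ((((hcoord.pow 2).mul_const 2⁻¹).sub ((hcoord.pow 3).mul_const 3⁻¹)).const_mul s)
  rw [hprimitive.fderiv]
  simp only [displacedLagrangian, fderiv_shearField_apply, areaDensity, displace, shearField,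
    Prod.fst_add, Prod.snd_add, Prod.smul_fst, Prod.smul_snd, smul_eq_mul, add_apply,
    _root_.sub_apply, smul_apply, ContinuousLinearMap.coe_fst', nsmul_eq_mul]
  rw [← cross_shearDirection v]
  push_cast
  ring

lemma action_areaDensity_shear (hne : pm ≠ pp) (s : ℝ) (hγ : IsCurve a b γ pm pp) :
    action areaDensity a b (displace (shearField pm pp) s ∘ γ) =
      action areaDensity a b γ + s / 6 := by
  obtain ⟨-, hLip, ha, hb⟩ := hγ
  have hincrement : shearPrimitive pm pp s (γ b) - shearPrimitive pm pp s (γ a) = s / 6 := by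
    rw [ha, hb, shearPrimitive, shearPrimitive, axialCoord_left, axialCoord_right hne]
    ring
  rw [← sub_eq_iff_eq_add', ← hincrement, ← action_fderiv contDiff_shearPrimitive hLip,
    action_displace_comp contDiff_shearField _ _ hLip]
  simp only [← displacedLagrangian_areaDensity_sub]
  exact (intervalIntegral.integral_sub (intervalIntegrable_action (continuous_displacedLagrangian
    contDiff_shearField s continuous_areaDensity) hLip a b)
    (intervalIntegrable_action continuous_areaDensity hLip a b)).symm

lemma IsCurve.shear (hne : pm ≠ pp) (s : ℝ) (hγ : IsCurve a b γ pm pp) :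
    IsCurve a b (displace (shearField pm pp) s ∘ γ) pm pp := by
  obtain ⟨hab, hLip, ha, hb⟩ := hγ
  refine ⟨hab, locallyLipschitz_displace_comp contDiff_shearField s hLip, ?_, ?_⟩
  · rw [Function.comp_apply, ha, displace, shearField_left, smul_zero, add_zero]
  · rw [Function.comp_apply, hb, displace, shearField_right hne, smul_zero, add_zero]

end Shear

section Constraint

variable {F W : ℝ × ℝ → ℝ} {pm pp : ℝ × ℝ} {R κ A a b : ℝ} {γ : ℝ → ℝ × ℝ}

lemma exists_sign_abs_add_mul_sub_eq {x A t : ℝ} (ht : t ≤ |x - A|) :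
    ∃ σ : ℝ, |σ| = 1 ∧ |x + σ * t - A| = |x - A| - t := by
  rcases le_total x A with hxA | hxA
  · rw [abs_of_nonpos (sub_nonpos.2 hxA)] at ht ⊢
    exact ⟨1, abs_one, by rw [abs_of_nonpos (by linarith)]; ring⟩
  · rw [abs_of_nonneg (sub_nonneg.2 hxA)] at ht ⊢
    exact ⟨-1, by rw [abs_neg, abs_one], by rw [abs_of_nonneg (by linarith)]; ring⟩

-- If the area misses `A`, the shear by a small `σ t` towards `A` costs length at least `κ t / 6` by
-- penalized minimality, whereas the opposite shear by `s` gains at most `κ s / 24`; for small `s`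
-- this contradicts the almost convexity `hconvex`.
lemma action_areaDensity_eq_of_forall_penalized_le (hne : pm ≠ pp) (hγ : IsCurve a b γ pm pp)
    {K E₁ s : ℝ} (hK : 0 ≤ K) (hκ : 0 < κ) (hs : 0 < s)
    (hsmall : 2 * K * E₁ * s ≤ κ / 24) (hE₁ : action (lengthDensity F) a b γ ≤ E₁)
    (hE₀ : 0 ≤ action (lengthDensity F) a b γ)
    (hconvex : ∀ σ t : ℝ, |σ| = 1 → 0 < t → t ≤ s →
      t * action (lengthDensity F) a b (displace (shearField pm pp) (-(σ * s)) ∘ γ) +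
          s * action (lengthDensity F) a b (displace (shearField pm pp) (σ * t) ∘ γ) ≤
        (s + t) * (1 + K * (s * t)) * action (lengthDensity F) a b γ)
    (hlength : ∀ β, IsCurve a b β pm pp →
      action (lengthDensity F) a b γ - κ * (s / 24) ≤ action (lengthDensity F) a b β)
    (hmin : ∀ β, IsCurve a b β pm pp → penalized F κ A a b γ ≤ penalized F κ A a b β) :
    action areaDensity a b γ = A := by
  by_contra hmiss
  have hpos : 0 < |action areaDensity a b γ - A| := abs_pos.2 (sub_ne_zero.2 hmiss)
  obtain ⟨t, ht, hts, htd⟩ : ∃ t, 0 < t ∧ t ≤ s ∧ t / 6 ≤ |action areaDensity a b γ - A| :=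
    ⟨min s |action areaDensity a b γ - A|, by positivity, min_le_left _ _,
      by linarith [min_le_right s |action areaDensity a b γ - A|]⟩
  obtain ⟨σ, hσ, hσA⟩ := exists_sign_abs_add_mul_sub_eq htd
  have htowards := hmin _ (hγ.shear hne (σ * t))
  rw [penalized, penalized, action_areaDensity_shear hne _ hγ, mul_div_assoc, hσA] at htowards
  have haway := hlength _ (hγ.shear hne (-(σ * s)))
  have herror : (s + t) * (K * (s * t)) * action (lengthDensity F) a b γ ≤
      s * t * (κ / 24) := by
    calc (s + t) * (K * (s * t)) * action (lengthDensity F) a b γ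
        ≤ (2 * s) * (K * (s * t)) * E₁ := by gcongr; linarith
      _ = s * t * (2 * K * E₁ * s) := by ring
      _ ≤ s * t * (κ / 24) := by gcongr
  nlinarith [hconvex σ t hσ ht hts, mul_le_mul_of_nonneg_left htowards hs.le,
    mul_le_mul_of_nonneg_left haway ht.le, mul_pos hκ (mul_pos hs ht)]

lemma isoSol_of_forall_penalized_le (hγ : IsCurve a b γ pm pp)
    (harea : action areaDensity a b γ = A)
    (hmin : ∀ a' b' β, IsCurve a' b' β pm pp →
      penalized F κ A a b γ ≤ penalized F κ A a' b' β) :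
    IsoSol F pm pp A a b γ := by
  refine ⟨hγ, (sArea_eq_action hγ.2.1 a b).trans harea, fun a' b' β hβ hβA => ?_⟩
  rw [sArea_eq_action hβ.2.1] at hβA
  have hle := hmin a' b' β hβ
  simp only [penalized, harea, hβA, sub_self, abs_zero, mul_zero, add_zero] at hle
  exact hle

end Constraint

section Existence

variable {W : ℝ × ℝ → ℝ} {pm pp : ℝ × ℝ} {R : ℝ}

lemma IsC2TwoWell.exists_action_shear_convex (hW : IsC2TwoWell W pm pp) (hm : ‖pm‖ ≤ R)
    (hp : ‖pp‖ ≤ R) :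
    ∃ K ≥ 0, ∀ a b γ, IsCurve a b γ pm pp → (∀ t ∈ Icc a b, ‖γ t‖ ≤ R) →
      ∀ s ≤ 1, ∀ σ t : ℝ, |σ| = 1 → 0 < t → t ≤ s →
        t * action (lengthDensity fun p => √(W p)) a b
              (displace (shearField pm pp) (-(σ * s)) ∘ γ) +
            s * action (lengthDensity fun p => √(W p)) a b
              (displace (shearField pm pp) (σ * t) ∘ γ) ≤
          (s + t) * (1 + K * (s * t)) * action (lengthDensity fun p => √(W p)) a b γ := by
  obtain ⟨K, hK, hconvex⟩ := hW.exists_action_displace_convex contDiff_shearField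
    shearField_left (shearField_right hW.wells_ne) hm hp
  refine ⟨K, hK, fun a b γ hγ hR s hs σ t hσ ht hts => ?_⟩
  have hs₀ : 0 < s := ht.trans_le hts
  have hσ₂ : σ ^ 2 = 1 := by rw [← sq_abs, hσ, one_pow]
  have habs {x : ℝ} (hx₀ : 0 < x) (hx : x ≤ 1) : |σ * x| ≤ 1 := by
    rwa [abs_mul, hσ, one_mul, abs_of_pos hx₀]
  convert hconvex a b γ hγ.1 hγ.2.1 hR t s (-(σ * s)) (σ * t) ht.le hs₀.le
    (by rw [abs_neg]; exact habs hs₀ hs) (habs ht (hts.trans hs)) (by ring) using 2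
  rw [neg_sq, mul_pow, mul_pow, hσ₂]
  ring

lemma IsC2TwoWell.exists_confinesCurves (hW : IsC2TwoWell W pm pp) {E₁ : ℝ} (hE₁ : 0 ≤ E₁) :
    ∃ R, ‖pm‖ ≤ R ∧ ‖pp‖ ≤ R ∧ ConfinesCurves (fun p => √(W p)) pm E₁ R := by
  obtain ⟨c, hc, R₁, hcW⟩ := hW.coercive
  have hm : ‖pm‖ ≤ max R₁ (max ‖pm‖ ‖pp‖) := le_max_of_le_right (le_max_left _ _)
  have hp : ‖pp‖ ≤ max R₁ (max ‖pm‖ ‖pp‖) := le_max_of_le_right (le_max_right _ _)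
  have hslack : 0 ≤ E₁ / √c := by positivity
  refine ⟨max R₁ (max ‖pm‖ ‖pp‖) + E₁ / √c, hm.trans (le_add_of_nonneg_right hslack),
    hp.trans (le_add_of_nonneg_right hslack), fun a b γ hγ ha hE t ht => ?_⟩
  exact norm_le_of_action_le hW.contDiff.continuous.sqrt (fun _ => Real.sqrt_nonneg _)
    (Real.sqrt_pos.2 hc) (fun p hp => Real.sqrt_le_sqrt (hcW p ((le_max_left _ _).trans hp))) hγ
    (by rwa [ha]) hE ht

lemma exists_pos_le_one_mul_le {x y : ℝ} (hx : 0 ≤ x) (hy : 0 < y) :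
    ∃ s > 0, s ≤ 1 ∧ x * s ≤ y := by
  refine ⟨min 1 (y / (x + 1)), by positivity, min_le_left _ _, ?_⟩
  calc x * min 1 (y / (x + 1)) ≤ (x + 1) * (y / (x + 1)) := by
        gcongr
        · linarith
        · exact min_le_right _ _
    _ = y := by field_simp

lemma TwoWell.isC2TwoWell (hW : TwoWell W pm pp) : IsC2TwoWell W pm pp :=
  ⟨contDiff_infty.1 hW.smooth 2, hW.nonneg, hW.wells_ne, hW.zeroSet, hW.hess_m,
    hW.hess_p, hW.coercive⟩

theorem existence_no_bubbles_general (hW : IsC2TwoWell W pm pp) {γ₀ : ℝ → ℝ × ℝ}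
    (hγ₀ : IsCurve 0 1 γ₀ pm pp)
    (hmin₀ : ∀ a b γ, IsCurve a b γ pm pp →
      degLen (fun p => √(W p)) 0 1 γ₀ ≤ degLen (fun p => √(W p)) a b γ) :
    ∃ ε₁ > (0 : ℝ), ∀ A : ℝ, |A - sArea 0 1 γ₀| < ε₁ →
      ∃ a b γ, IsoSol (fun p => √(W p)) pm pp A a b γ ∧
        ∀ t ∈ Ioo a b, γ t ≠ pm ∧ γ t ≠ pp := by
  set F : ℝ × ℝ → ℝ := fun p => √(W p)
  have hlength_nonneg {a b : ℝ} (hab : a ≤ b) (γ : ℝ → ℝ × ℝ) :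
      0 ≤ action (lengthDensity F) a b γ :=
    action_nonneg (lengthDensity_nonneg fun _ => Real.sqrt_nonneg _) hab
  set E₁ := action (lengthDensity F) 0 1 γ₀ + 1
  have hE₁ : 0 ≤ E₁ := add_nonneg (hlength_nonneg zero_le_one γ₀) zero_le_one
  obtain ⟨R, hm, hp, hconf⟩ := hW.exists_confinesCurves hE₁
  obtain ⟨C, c, hB⟩ := hW.exists_linearWellBounds hm hp
  obtain ⟨C₀, hC₀, hA⟩ := hB.exists_isAreaPotential
  obtain ⟨K, hK, hconvex⟩ := hW.exists_action_shear_convex hm hp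
  obtain ⟨κ, hκ, hκ₁, hκC⟩ := exists_pos_le_one_mul_le hC₀.le one_half_pos
  obtain ⟨s, hs, hs₁, hsmall⟩ := exists_pos_le_one_mul_le (by positivity : 0 ≤ 2 * K * E₁)
    (by positivity : 0 < κ / 24)
  refine ⟨s / 24, by positivity, fun A hclose => ?_⟩
  have hγ₀le : penalized F κ A 0 1 γ₀ ≤ action (lengthDensity F) 0 1 γ₀ + κ * (s / 24) := by
    rw [abs_sub_comm, sArea_eq_action hγ₀.2.1] at hclose
    unfold penalized
    gcongr
  have hbudget : action (lengthDensity F) 0 1 γ₀ + κ * (s / 24) ≤ E₁ :=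
    add_le_add le_rfl (by nlinarith)
  obtain ⟨a, b, γ, hγ, hwells, hR, hmin⟩ := exists_isCurve_forall_penalized_le hB hA hκ.le
    (by rwa [mul_comm]) hconf hγ₀ (hγ₀le.trans hbudget)
  have hγle := (action_le_penalized hκ.le A).trans ((hmin 0 1 γ₀ hγ₀).trans hγ₀le)
  have harea := action_areaDensity_eq_of_forall_penalized_le hW.wells_ne hγ hK hκ hs hsmall
    (hγle.trans hbudget) (hlength_nonneg hγ.1 γ) (hconvex a b γ hγ hR s hs₁)
    (fun β hβ => sub_le_iff_le_add.2 (hγle.trans (add_le_add_left (hmin₀ a b β hβ) _)))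
    fun β hβ => hmin a b β hβ
  exact ⟨a, b, γ, isoSol_of_forall_penalized_le hγ harea hmin, hwells⟩

end Existence

/-- for `A` close enough to `𝒜(γ₀)`, the isoperimetric problem has a solution
which meets the wells only at its endpoints (no bubbles through the wells). -/
theorem existence_no_bubbles
    (W : ℝ × ℝ → ℝ) (pm pp : ℝ × ℝ) (hW : TwoWell W pm pp)
    (F : ℝ × ℝ → ℝ) (hF : F = fun p => Real.sqrt (W p))
    (γ0 : ℝ → ℝ × ℝ) (hγ0 : IsCurve 0 1 γ0 pm pp)
    (hmin : ∀ a b γ, IsCurve a b γ pm pp → degLen F 0 1 γ0 ≤ degLen F a b γ) :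
    ∃ ε1 > (0:ℝ), ∀ A : ℝ, |A - sArea 0 1 γ0| < ε1 →
      ∃ a b γ, IsoSol F pm pp A a b γ ∧
        ∀ t ∈ Set.Ioo a b, γ t ≠ pm ∧ γ t ≠ pp := by
  subst hF
  exact existence_no_bubbles_general hW.isC2TwoWell hγ0 hmin
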